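/- arXiv:1804.02349 — 3 statements merged into one kernel-verified Lean document; each statement's English description precedes it below -/
import Mathlib

section
/- Let f be an entire function of finite order. If there exists a set Ω ⊂ ℂ of zero area density such that f is bounded on ℂ \ Ω, then f is constant. -/
open MeasureTheory Filter

open Real in
/-- `log⁺ ‖g‖` satisfies the sub-mean value inequality on circles, for `g` entire. -/
theorem Differentiable.posLog_norm_le_circleAverage {g : ℂ → ℂ} (hg : Differentiable ℂ g)
    (c : ℂ) {r : ℝ} (hr : 0 < r) :
    posLog ‖g c‖ ≤ circleAverage (fun z => posLog ‖g z‖) c r := by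
  have hnonneg : 0 ≤ circleAverage (fun z => posLog ‖g z‖) c r :=
    circleAverage_nonneg_of_nonneg fun _ _ => posLog_nonneg
  by_cases hc : g c = 0
  · simpa [hc] using hnonneg
  have han : AnalyticOnNhd ℂ g (Metric.closedBall c |r|) := fun z _ => hg.analyticAt z
  have hsph : MeromorphicOn g (Metric.sphere c |r|) := fun z _ => (hg.analyticAt z).meromorphicAt
  have hsum : 0 ≤ ∑ᶠ u, MeromorphicOn.divisor g (Metric.closedBall c |r|) u
      * Real.log (r * ‖c - u‖⁻¹) := by
    refine finsum_nonneg fun u => ?_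
    by_cases hu : u ∈ Metric.closedBall c |r|
    · refine mul_nonneg (mod_cast MeromorphicOn.AnalyticOnNhd.divisor_nonneg han u) ?_
      rw [Metric.mem_closedBall, dist_eq_norm', abs_of_pos hr] at hu
      rcases (norm_nonneg (c - u)).eq_or_lt with h | h
      · simp [← h]
      · exact Real.log_nonneg (by rw [← div_eq_mul_inv, one_le_div h]; exact hu)
    · simp [hu]
  have hmono : circleAverage (fun z => Real.log ‖g z‖) c r
      ≤ circleAverage (fun z => posLog ‖g z‖) c r :=
    circleAverage_mono hsph.circleIntegrable_log_norm hsph.circleIntegrable_posLog_norm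
      fun z _ => le_max_right _ _
  have hJ := han.circleAverage_log_norm hr.ne' hc
  exact max_le hnonneg (by linarith)

open Real in
/-- A continuous function satisfying the sub-mean value inequality on circles centred at `c`
satisfies it on discs centred at `c`. -/
theorem mul_pi_mul_sq_le_setIntegral_ball {u : ℂ → ℝ} (hu : Continuous u) (c : ℂ)
    (h : ∀ r, 0 < r → u c ≤ circleAverage u c r) {R : ℝ} (hR : 0 < R) :
    u c * (π * R ^ 2) ≤ ∫ z in Metric.ball c R, u z := by
  have hmap (r θ : ℝ) : c + Complex.polarCoord.symm (r, θ) = circleMap c r θ := by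
    rw [Complex.polarCoord_symm_apply, circleMap, Complex.exp_mul_I]
    push_cast
    rfl
  have hcont : Continuous fun p : ℝ × ℝ => p.1 * u (circleMap c p.1 p.2) := by fun_prop
  have hangle (r : ℝ) (hr : 0 < r) :
      r * (u c * (2 * π)) ≤ ∫ θ in Set.Ioo (-π) π, r * u (circleMap c r θ) := by
    have hper : Function.Periodic (fun θ => u (circleMap c r θ)) (2 * π) :=
      fun θ => by simp only [periodic_circleMap c r θ]
    have h1 := hper.intervalIntegral_add_eq (-π) 0
    rw [show -π + 2 * π = π by ring, zero_add] at h1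
    rw [integral_const_mul, ← integral_Ioc_eq_integral_Ioo,
      ← intervalIntegral.integral_of_le (by linarith [pi_pos]), h1]
    have h2 := h r hr
    rw [circleAverage_def, smul_eq_mul, ← div_eq_inv_mul, le_div_iff₀ two_pi_pos] at h2
    exact mul_le_mul_of_nonneg_left h2 hr.le
  have hinteg : IntegrableOn (fun p : ℝ × ℝ => p.1 * u (circleMap c p.1 p.2))
      (Set.Ioo 0 R ×ˢ Set.Ioo (-π) π) (volume.prod volume) :=
    (hcont.continuousOn.integrableOn_compact (isCompact_Icc.prod isCompact_Icc)).mono_set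
      (Set.prod_mono Set.Ioo_subset_Icc_self Set.Ioo_subset_Icc_self)
  have hpolar : ∫ z in Metric.ball c R, u z
      = ∫ r in Set.Ioo 0 R, ∫ θ in Set.Ioo (-π) π, r * u (circleMap c r θ) := by
    rw [← setIntegral_prod _ hinteg, ← integral_indicator Metric.isOpen_ball.measurableSet,
      ← integral_add_left_eq_self _ c, ← Complex.integral_comp_polarCoord_symm,
      ← integral_indicator polarCoord.open_target.measurableSet,
      ← integral_indicator (measurableSet_Ioo.prod measurableSet_Ioo)]
    refine integral_congr_ae (Eventually.of_forall ?_)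
    rintro ⟨r, θ⟩
    have hball (hr : 0 < r) : c + Complex.polarCoord.symm (r, θ) ∈ Metric.ball c R ↔ r < R := by
      rw [Metric.mem_ball, dist_eq_norm, add_sub_cancel_left, Complex.norm_polarCoord_symm,
        abs_of_pos hr]
    by_cases hr : 0 < r <;> by_cases hθ : θ ∈ Set.Ioo (-π) π <;> by_cases hrR : r < R <;>
      simp_all [polarCoord_target]
  have hleft : ∫ r in Set.Ioo 0 R, r * (u c * (2 * π)) = u c * (π * R ^ 2) := by
    rw [← integral_Ioc_eq_integral_Ioo, ← intervalIntegral.integral_of_le hR.le,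
      intervalIntegral.integral_mul_const, integral_id]
    ring
  rw [hpolar, ← hleft]
  rw [IntegrableOn, ← Measure.prod_restrict] at hinteg
  refine setIntegral_mono_on ?_ hinteg.integral_prod_left measurableSet_Ioo
    fun r hr => hangle r hr.1
  exact ((continuous_id.mul continuous_const).continuousOn.integrableOn_Icc).mono_set
    Set.Ioo_subset_Icc_self

/-- A nonnegative sub-mean value function of polynomial growth, supported in a set of zero area
density, vanishes. -/
theorem eq_zero_of_subMean_of_zero_density {u : ℂ → ℝ} (hu : Continuous u) (hu0 : ∀ z, 0 ≤ u z)
    (hmean : ∀ c r, 0 < r → u c ≤ Real.circleAverage u c r)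
    {A ρ : ℝ} (hgrowth : ∀ z, u z ≤ A + ‖z‖ ^ ρ) (hA : 0 ≤ A) (hρ : 0 < ρ) {Ω : Set ℂ}
    (hΩ : Tendsto (fun R : ℝ => (volume (Ω ∩ Metric.ball (0 : ℂ) R)).toReal / R ^ 2)
      atTop (nhds 0))
    (hsupp : ∀ z ∉ Ω, u z = 0) (z : ℂ) : u z = 0 := by
  have hpi := Real.pi_pos
  set K : ℝ := 2 * 2 ^ ρ with hK
  have h2ρ : (1 : ℝ) ≤ 2 ^ ρ := Real.one_le_rpow one_le_two hρ.le
  have hKpos : 0 < K := by positivity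
  have hev := hΩ.eventually_le_const (show (0 : ℝ) < Real.pi / (4 * K) by positivity)
  obtain ⟨R₀, hR₀⟩ := eventually_atTop.1 (hev.and (eventually_gt_atTop 0))
  have hdouble (R B : ℝ) (hR : R₀ ≤ R) (hRpos : 0 < R)
      (hB : ∀ w, ‖w‖ ≤ 2 * R → u w ≤ B) (w : ℂ) (hw : ‖w‖ ≤ R) : u w ≤ K⁻¹ * B := by
    have hB0 : 0 ≤ B := (hu0 0).trans (hB 0 (by simp; positivity))
    have hdens := (hR₀ (2 * R) (by linarith)).1
    rw [div_le_iff₀ (by positivity)] at hdens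
    set S := {v | u v ≠ 0} ∩ Metric.ball w R
    have hSm : MeasurableSet S :=
      ((isOpen_ne_fun hu continuous_const).inter Metric.isOpen_ball).measurableSet
    have hSfin : volume S ≠ ⊤ :=
      ((measure_mono Set.inter_subset_right).trans_lt measure_ball_lt_top).ne
    have hball : Metric.ball w R ⊆ Metric.ball 0 (2 * R) :=
      Metric.ball_subset_ball' (by rw [dist_zero_right]; linarith)
    have hvol : volume.real S ≤ (volume (Ω ∩ Metric.ball (0 : ℂ) (2 * R))).toReal := by
      refine ENNReal.toReal_mono
        ((measure_mono Set.inter_subset_right).trans_lt measure_ball_lt_top).ne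
        (measure_mono fun v hv => ⟨?_, hball hv.2⟩)
      by_contra hvΩ
      exact hv.1 (hsupp v hvΩ)
    have hinteg : ∫ v in Metric.ball w R, u v = ∫ v in S, u v := by
      refine setIntegral_eq_of_subset_of_forall_sdiff_eq_zero Metric.isOpen_ball.measurableSet
        Set.inter_subset_right fun v hv => ?_
      by_contra hne
      exact hv.2 ⟨hne, hv.1⟩
    have hle : ∫ v in S, u v ≤ B * volume.real S := by
      refine (setIntegral_mono_on (g := fun _ => B) ?_ (integrableOn_const hSfin) hSm
        fun v hv => hB v (mem_ball_zero_iff.1 (hball hv.2)).le).trans_eq (by simp [mul_comm])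
      exact (hu.continuousOn.integrableOn_compact (isCompact_closedBall w R)).mono_set
        (Set.inter_subset_right.trans Metric.ball_subset_closedBall)
    have hsub := mul_pi_mul_sq_le_setIntegral_ball hu w (hmean w) hRpos
    have hchain : u w * (Real.pi * R ^ 2) ≤ K⁻¹ * B * (Real.pi * R ^ 2) := by
      calc u w * (Real.pi * R ^ 2) ≤ B * volume.real S := by rw [hinteg] at hsub; linarith
        _ ≤ B * (Real.pi / (4 * K) * (2 * R) ^ 2) :=
            mul_le_mul_of_nonneg_left (hvol.trans hdens) hB0
        _ = K⁻¹ * B * (Real.pi * R ^ 2) := by field_simp; ring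
    exact le_of_mul_le_mul_right hchain (by positivity)
  have hiter (n : ℕ) : ∀ R : ℝ, R₀ ≤ R → 0 < R → ∀ w : ℂ, ‖w‖ ≤ R →
      u w ≤ (1 / 2) ^ n * (A + R ^ ρ) := by
    induction n with
    | zero =>
      intro R _ hRpos w hw
      have := Real.rpow_le_rpow (norm_nonneg w) hw hρ.le
      have := hgrowth w
      simp only [pow_zero, one_mul]
      linarith
    | succ n ih =>
      intro R hR hRpos w hw
      refine (hdouble R _ hR hRpos (ih (2 * R) (by linarith) (by linarith)) w hw).trans ?_
      rw [Real.mul_rpow zero_le_two hRpos.le, inv_mul_le_iff₀ hKpos, pow_succ]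
      have : A + 2 ^ ρ * R ^ ρ ≤ 2 ^ ρ * (A + R ^ ρ) := by nlinarith
      calc (1 / 2 : ℝ) ^ n * (A + 2 ^ ρ * R ^ ρ) ≤ (1 / 2) ^ n * (2 ^ ρ * (A + R ^ ρ)) := by gcongr
        _ = K * ((1 / 2) ^ n * (1 / 2) * (A + R ^ ρ)) := by rw [hK]; ring
  have hlim : Tendsto (fun n : ℕ => (1 / 2 : ℝ) ^ n * (A + (max R₀ (‖z‖ + 1)) ^ ρ)) atTop
      (nhds 0) := by
    simpa using (tendsto_pow_atTop_nhds_zero_of_lt_one (by norm_num : (0 : ℝ) ≤ 1 / 2)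
      (by norm_num)).mul_const (A + (max R₀ (‖z‖ + 1)) ^ ρ)
  refine le_antisymm (ge_of_tendsto' hlim fun n => hiter n _ (le_max_left _ _) ?_ z ?_) (hu0 z)
  · exact lt_max_of_lt_right (by positivity)
  · exact le_max_of_le_right (by linarith)

/-- Let `f` be an entire function of finite order (|f(z)| ≤ C exp(|z|^ρ)).
If there exists a set `Ω ⊂ ℂ` of zero area density (m₂(Ω ∩ D(0,R))/R² → 0) such that `f`
is bounded on `ℂ \ Ω`, then `f` is constant. -/
theorem stmt1 (f : ℂ → ℂ) (hf : Differentiable ℂ f)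
    (C ρ : ℝ) (hC : 0 < C) (hρ : 0 < ρ)
    (hgrowth : ∀ z : ℂ, ‖f z‖ ≤ C * Real.exp (‖z‖ ^ ρ))
    (Ω : Set ℂ)
    (hΩ : Tendsto (fun R : ℝ => (volume (Ω ∩ Metric.ball (0 : ℂ) R)).toReal / R ^ 2)
      atTop (nhds 0))
    (M : ℝ) (hM : ∀ z ∉ Ω, ‖f z‖ ≤ M) :
    ∃ c : ℂ, ∀ z, f z = c := by
  set N : ℝ := max M 1
  have hN : 1 ≤ N := le_max_right _ _
  have hNpos : 0 < N := by linarith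
  set g : ℂ → ℂ := fun z => f z / N with hg
  have hgd : Differentiable ℂ g := hf.div_const _
  have hgn (z : ℂ) : ‖g z‖ = ‖f z‖ / N := by
    simp [hg, abs_of_pos hNpos]
  have hzero := eq_zero_of_subMean_of_zero_density (u := fun z => Real.posLog ‖g z‖)
    (Real.continuous_posLog.comp hgd.continuous.norm) (fun _ => Real.posLog_nonneg)
    (fun c r hr => hgd.posLog_norm_le_circleAverage c hr) (A := Real.posLog C) (ρ := ρ)
    (fun z => ?_) Real.posLog_nonneg hρ hΩ (fun z hz => ?_)
  · have hb : Bornology.IsBounded (Set.range f) := by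
      refine isBounded_iff_forall_norm_le.2 ⟨N, ?_⟩
      rintro _ ⟨z, rfl⟩
      have h := (Real.posLog_eq_zero_iff _).1 (hzero z)
      rwa [abs_norm, hgn, div_le_one hNpos] at h
    exact ⟨f 0, fun z => hf.apply_eq_apply_of_bounded hb z 0⟩
  · calc Real.posLog ‖g z‖ ≤ Real.posLog (C * Real.exp (‖z‖ ^ ρ)) := by
          refine Real.posLog_le_posLog (norm_nonneg _) ?_
          rw [hgn]
          exact (div_le_self (norm_nonneg _) hN).trans (hgrowth z)
      _ ≤ Real.posLog C + Real.posLog (Real.exp (‖z‖ ^ ρ)) := Real.posLog_mul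
      _ = Real.posLog C + ‖z‖ ^ ρ := by
          rw [Real.posLog_apply, Real.posLog_apply, Real.log_exp, max_eq_right (b := ‖z‖ ^ ρ)]
          positivity
  · rw [Real.posLog_eq_zero_iff, abs_norm, hgn, div_le_one hNpos]
    exact (hM z hz).trans (le_max_left _ _)
end

section
/- Let S be a function in the parametrizing class 𝒮, i.e., G(z)S(z) = A(z)Σₙ G(tₙ)c̄ₙ/(A'(tₙ)μₙ^{1/2}(z−tₙ)) for some (cₙ) ∈ ℓ², where G vanishes on Λ and G/A has the expansion G(z)/A(z) = (z−λ₀)Σₙ G(tₙ)/(A'(tₙ)(tₙ−λ₀)(z−tₙ)) for λ₀ ∈ Λ. Then for every w ∈ ℂ, the difference quotient (S(z) − S(w))/(z − w) also belongs to 𝒮. -/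
open Filter

/-- The parametrizing class `𝒮`: an entire function `S` belongs to `𝒮` if
`G(z)S(z) = A(z)Σₙ G(tₙ)c̄ₙ/(A'(tₙ)μₙ^{1/2}(z−tₙ))` for some `(cₙ) ∈ ℓ²`. -/
def InSClass (t : ℕ → ℂ) (μ : ℕ → ℝ) (A G : ℂ → ℂ) (S : ℂ → ℂ) : Prop :=
  Differentiable ℂ S ∧ ∃ c : ℕ → ℂ, Summable (fun n => ‖c n‖ ^ 2) ∧
    ∀ z ∉ Set.range t,
      G z * S z = A z * ∑' n, G (t n) * (starRingEnd ℂ) (c n) /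
        (deriv A (t n) * (Real.sqrt (μ n) : ℂ) * (z - t n))

open Topology Asymptotics

/-- Distances to a sequence tending to infinity are comparable for different base points. -/
theorem eventually_norm_sub_le_two_mul {t : ℕ → ℂ} (ht : Tendsto (fun n => ‖t n‖) atTop atTop)
    (p u : ℂ) : ∀ᶠ n in atTop, ‖u - t n‖ ≤ 2 * ‖p - t n‖ := by
  filter_upwards [ht.eventually_ge_atTop (‖u - p‖ + ‖p‖)] with n hn
  have h1 := norm_sub_le_norm_sub_add_norm_sub u p (t n)
  have h2 := norm_sub_norm_le (t n) p
  rw [norm_sub_rev (t n) p] at h2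
  linarith

theorem isBigO_inv_sub {t : ℕ → ℂ} (ht : Tendsto (fun n => ‖t n‖) atTop atTop)
    (p u : ℂ) : (fun n => (p - t n)⁻¹) =O[atTop] fun n => (u - t n)⁻¹ := by
  refine IsBigO.of_bound 2 ?_
  filter_upwards [eventually_norm_sub_le_two_mul ht p u,
    eventually_ne_of_tendsto_norm_atTop ht p, eventually_ne_of_tendsto_norm_atTop ht u]
    with n hn hp hu
  have hp' : 0 < ‖p - t n‖ := norm_pos_iff.2 (sub_ne_zero.2 hp.symm)
  have hu' : 0 < ‖u - t n‖ := norm_pos_iff.2 (sub_ne_zero.2 hu.symm)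
  rw [norm_inv, norm_inv, ← div_eq_mul_inv, le_div_iff₀ hu', inv_mul_le_iff₀ hp']
  linarith

theorem isBigO_inv_sub_one {t : ℕ → ℂ} (ht : Tendsto (fun n => ‖t n‖) atTop atTop)
    (p : ℂ) : (fun n => (p - t n)⁻¹) =O[atTop] fun _ => (1 : ℂ) := by
  refine IsBigO.of_bound 1 ?_
  filter_upwards [ht.eventually_ge_atTop (1 + ‖p‖)] with n hn
  have h2 := norm_sub_norm_le (t n) p
  rw [norm_sub_rev (t n) p] at h2
  rw [norm_inv, norm_one, one_mul]
  exact inv_le_one_of_one_le₀ (by linarith)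

theorem summable_div_sub {t : ℕ → ℂ} (ht : Tendsto (fun n => ‖t n‖) atTop atTop)
    {x : ℕ → ℂ} {u : ℂ} (hx : Summable fun n => x n / (u - t n)) (p : ℂ) :
    Summable fun n => x n / (p - t n) := by
  refine summable_of_isBigO_nat hx.norm ?_
  simp only [div_eq_mul_inv]
  exact ((isBigO_refl x _).mul (isBigO_inv_sub ht p u)).norm_right

/-- Near a point `w`, the distances to the points `t n ≠ w` do not shrink by more than half. -/
theorem eventually_nhds_norm_sub_le {t : ℕ → ℂ} (ht : Tendsto (fun n => ‖t n‖) atTop atTop)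
    (w : ℂ) : ∀ᶠ z in 𝓝 w, ∀ n, t n ≠ w → ‖w - t n‖ ≤ 2 * ‖z - t n‖ := by
  obtain ⟨N, hN⟩ := eventually_atTop.1 (ht.eventually_ge_atTop (1 + ‖w‖))
  have key : ∀ z : ℂ, ∀ n, ‖z - w‖ ≤ ‖w - t n‖ / 2 → ‖w - t n‖ ≤ 2 * ‖z - t n‖ := by
    intro z n h
    have := norm_sub_le_norm_sub_add_norm_sub w z (t n)
    rw [norm_sub_rev w z] at this
    linarith
  have hnear : ∀ r : ℝ, 0 < r → ∀ᶠ z in 𝓝 w, ‖z - w‖ ≤ r := fun r hr => by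
    filter_upwards [Metric.ball_mem_nhds w hr] with z hz
    rw [← dist_eq_norm]
    exact (Metric.mem_ball.1 hz).le
  have hfin : ∀ᶠ z in 𝓝 w, ∀ n ∈ Finset.range N, t n ≠ w → ‖w - t n‖ ≤ 2 * ‖z - t n‖ := by
    rw [Finset.eventually_all]
    intro n _
    by_cases h : t n = w
    · exact Eventually.of_forall fun z hz => absurd h hz
    · have : 0 < ‖w - t n‖ := norm_pos_iff.2 (sub_ne_zero.2 (Ne.symm h))
      filter_upwards [hnear _ (half_pos this)] with z hz _
      exact key z n hz
  filter_upwards [hfin, hnear (1 / 2) (by norm_num)] with z hz1 hz2 n hn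
  by_cases h : n < N
  · exact hz1 n (Finset.mem_range.2 h) hn
  · refine key z n ?_
    have h1 := hN n (not_lt.1 h)
    have h2 := norm_sub_norm_le (t n) w
    rw [norm_sub_rev (t n) w] at h2
    linarith

/-- A Cauchy transform is continuous at every point which carries no mass. -/
theorem continuousAt_tsum_div_sub {t : ℕ → ℂ} (ht : Tendsto (fun n => ‖t n‖) atTop atTop)
    {x : ℕ → ℂ} {w : ℂ} (hxw : ∀ n, t n = w → x n = 0)
    (hx : Summable fun n => x n / (w - t n)) :
    ContinuousAt (fun z => ∑' n, x n / (z - t n)) w := by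
  refine tendsto_tsum_of_dominated_convergence (hx.norm.mul_left 2) ?_ ?_
  · intro n
    by_cases h : t n = w
    · simp [hxw n h]
    · exact ContinuousAt.div (by fun_prop) (by fun_prop) (sub_ne_zero.2 (Ne.symm h))
  · filter_upwards [eventually_nhds_norm_sub_le ht w] with z hz n
    by_cases h : t n = w
    · simp [hxw n h]
    · have h0 : 0 < ‖w - t n‖ := norm_pos_iff.2 (sub_ne_zero.2 (Ne.symm h))
      have h1 := hz n h
      have h2 : 0 < ‖z - t n‖ := by linarith
      rw [norm_div, norm_div, div_le_iff₀ h2, mul_assoc, div_mul_eq_mul_div, ← mul_div_assoc,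
        le_div_iff₀ h0]
      nlinarith [norm_nonneg (x n)]

/-- The residue of a Cauchy transform at a point of its support. -/
theorem tendsto_sub_mul_tsum_div_sub {t : ℕ → ℂ} (htinj : Function.Injective t)
    (ht : Tendsto (fun n => ‖t n‖) atTop atTop) {x : ℕ → ℂ}
    (hx : ∀ z, Summable fun n => x n / (z - t n)) (m : ℕ) :
    Tendsto (fun z => (z - t m) * ∑' n, x n / (z - t n)) (𝓝[≠] t m) (𝓝 (x m)) := by
  set y : ℕ → ℂ := fun n => if n = m then 0 else x n with hy
  have hys : Summable fun n => y n / (t m - t n) := by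
    refine (hx (t m)).congr fun n => ?_
    by_cases h : n = m <;> simp [hy, h]
  have hc := continuousAt_tsum_div_sub ht (x := y) (w := t m)
    (fun n hn => by simp [hy, htinj hn]) hys
  have hlim : Tendsto (fun z => x m + (z - t m) * ∑' n, y n / (z - t n)) (𝓝 (t m))
      (𝓝 (x m + (t m - t m) * ∑' n, y n / (t m - t n))) :=
    tendsto_const_nhds.add ((tendsto_id.sub_const _).mul hc)
  rw [sub_self, zero_mul, add_zero] at hlim
  refine (hlim.mono_left nhdsWithin_le_nhds).congr' ?_
  filter_upwards [self_mem_nhdsWithin] with z hz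
  have hz' : z - t m ≠ 0 := sub_ne_zero.2 hz
  rw [(hx z).tsum_eq_add_tsum_ite m, mul_add, mul_div_cancel₀ _ hz']
  congr 2
  refine tsum_congr fun n => ?_
  by_cases h : n = m <;> simp [hy, h]

theorem Differentiable.eventually_ne_zero {f : ℂ → ℂ} (hf : Differentiable ℂ f)
    (h : ∃ z, f z ≠ 0) (w : ℂ) : ∀ᶠ z in 𝓝[≠] w, f z ≠ 0 := by
  have hf' : AnalyticOnNhd ℂ f Set.univ := fun z _ => hf.analyticAt z
  rcases (hf.analyticAt w).eventually_eq_zero_or_eventually_ne_zero with h0 | h0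
  · obtain ⟨z, hz⟩ := h
    exact absurd (hf'.eqOn_zero_of_preconnected_of_eventuallyEq_zero isPreconnected_univ
      (Set.mem_univ w) h0 (Set.mem_univ z)) hz
  · exact h0

theorem differentiable_dslope {S : ℂ → ℂ} (hS : Differentiable ℂ S) (w : ℂ) :
    Differentiable ℂ (dslope S w) :=
  differentiableOn_univ.1 ((Complex.differentiableOn_dslope univ_mem).2 hS.differentiableOn)

/-- Square summability of the coefficients of the difference quotient. -/
theorem summable_norm_sq_div_sub {t : ℕ → ℂ} (ht : Tendsto (fun n => ‖t n‖) atTop atTop)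
    {μ : ℕ → ℝ} (hμpos : ∀ n, 0 < μ n)
    (hμsum : Summable (fun n => μ n / (‖t n‖ ^ 2 + 1))) {c : ℕ → ℂ}
    (hc : Summable fun n => ‖c n‖ ^ 2) (s w : ℂ) :
    Summable fun n => ‖(c n - Real.sqrt (μ n) * s) / (t n - w)‖ ^ 2 := by
  have h1 : Summable fun n => ‖c n‖ ^ 2 * ‖(w - t n)⁻¹‖ ^ 2 := by
    refine summable_of_isBigO_nat hc ?_
    simpa using (isBigO_refl (fun n => ‖c n‖ ^ 2) atTop).mul
      ((isBigO_inv_sub_one ht w).norm_norm.pow 2)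
  have h2 : Summable fun n => μ n * ‖(w - t n)⁻¹‖ ^ 2 := by
    refine summable_of_isBigO_nat hμsum ?_
    simp only [div_eq_mul_inv]
    refine (isBigO_refl μ atTop).mul (((isBigO_inv_sub ht w 0).norm_norm.pow 2).trans ?_)
    refine IsBigO.of_bound 2 ?_
    filter_upwards [ht.eventually_ge_atTop 1] with n hn
    have h3 : (1 : ℝ) ≤ ‖t n‖ ^ 2 := one_le_pow₀ hn
    rw [zero_sub, norm_inv, norm_neg, inv_pow, Real.norm_of_nonneg (by positivity),
      Real.norm_of_nonneg (by positivity), ← div_eq_mul_inv,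
      le_div_iff₀ (by positivity), inv_mul_le_iff₀ (by positivity)]
    linarith
  refine Summable.of_nonneg_of_le (fun n => by positivity) (fun n => ?_)
    ((h1.mul_left 2).add ((h2.mul_left (‖s‖ ^ 2)).mul_left 2))
  have h3 := norm_sub_le (c n) (Real.sqrt (μ n) * s)
  have h4 : ‖(Real.sqrt (μ n) : ℂ) * s‖ ^ 2 = μ n * ‖s‖ ^ 2 := by
    rw [norm_mul, mul_pow, Complex.norm_real, Real.norm_of_nonneg (Real.sqrt_nonneg _),
      Real.sq_sqrt (hμpos n).le]
  have h5 : ‖c n - Real.sqrt (μ n) * s‖ ^ 2 ≤ 2 * (‖c n‖ ^ 2 + μ n * ‖s‖ ^ 2) := by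
    rw [← h4]
    nlinarith [norm_nonneg (c n - Real.sqrt (μ n) * s), norm_nonneg (c n),
      sq_nonneg (‖c n‖ - ‖(Real.sqrt (μ n) : ℂ) * s‖)]
  rw [div_eq_mul_inv, norm_mul, mul_pow, norm_inv (t n - w), norm_sub_rev (t n) w, ← norm_inv]
  nlinarith [mul_le_mul_of_nonneg_right h5 (sq_nonneg ‖(w - t n)⁻¹‖)]

theorem summable_div_sub_div_sub {t : ℕ → ℂ} (ht : Tendsto (fun n => ‖t n‖) atTop atTop)
    {x : ℕ → ℂ} {u v : ℂ} (hx : Summable fun n => x n / (u - t n) / (v - t n)) (p q : ℂ) :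
    Summable fun n => x n / (p - t n) / (q - t n) := by
  have h := summable_div_sub ht hx q
  simp only [div_right_comm _ (u - _)] at h
  simpa only [div_right_comm _ (q - _)] using summable_div_sub ht h p

theorem summable_div_sub_div_sub_of_summable_div_sub {t : ℕ → ℂ}
    (ht : Tendsto (fun n => ‖t n‖) atTop atTop)
    {x : ℕ → ℂ} {u : ℂ} (hx : Summable fun n => x n / (u - t n)) (p q : ℂ) :
    Summable fun n => x n / (p - t n) / (q - t n) := by
  refine summable_of_isBigO_nat (summable_div_sub ht hx p).norm ?_
  simp only [div_eq_mul_inv _ (q - _)]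
  simpa using ((isBigO_refl (fun n => x n / (p - t n)) atTop).mul
    (isBigO_inv_sub_one ht q)).norm_right

theorem tendsto_div_sub_of_eq_zero {A : ℂ → ℂ} (hA : Differentiable ℂ A) {w : ℂ}
    (hw : A w = 0) : Tendsto (fun z => A z / (z - w)) (𝓝[≠] w) (𝓝 (deriv A w)) := by
  refine (hasDerivAt_iff_tendsto_slope.1 (hA w).hasDerivAt).congr fun z => ?_
  rw [slope_def_field, hw, sub_zero]

/-- If `G S / A` and `G / A` are Cauchy transforms with masses `a n * s n` and `a n`
(the latter regularized at `l`), then the quotient of `S` at `w` yields a Cauchy transform too. -/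
theorem mul_dslope_eq_mul_tsum {t : ℕ → ℂ} (htinj : Function.Injective t)
    (ht : Tendsto (fun n => ‖t n‖) atTop atTop) {A G S : ℂ → ℂ} (hA : Differentiable ℂ A)
    (hG : Differentiable ℂ G) (hS : Differentiable ℂ S)
    (hAzero : ∀ n, A (t n) = 0) (hAsimple : ∀ n, deriv A (t n) ≠ 0)
    {l : ℂ} (hl : l ∉ Set.range t) {s : ℕ → ℂ} {a : ℕ → ℂ} (ha : ∀ n, a n = G (t n) / deriv A (t n))
    (hsum₁ : ∀ z, Summable fun n => a n * s n / (z - t n))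
    (hsum₂ : ∀ z, Summable fun n => a n / (t n - l) / (z - t n))
    (hGS : ∀ z ∉ Set.range t, G z * S z = A z * ∑' n, a n * s n / (z - t n))
    (hGA : ∀ z ∉ Set.range t,
      G z / A z = (z - l) * ∑' n, a n / (t n - l) / (z - t n))
    (w z : ℂ) (hz : z ∉ Set.range t) :
    G z * dslope S w z = A z * ∑' n, a n *
      (if t n = w then deriv S w else (s n - S w) / (t n - w)) / (z - t n) := by
  have hAne : ∀ p, ∀ᶠ z in 𝓝[≠] p, A z ≠ 0 := hA.eventually_ne_zero (by
    by_contra! h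
    exact hAsimple 0 (by rw [show A = fun _ => 0 from funext h, deriv_const]))
  have hoff : ∀ z, A z ≠ 0 → z ∉ Set.range t := by
    rintro _ h ⟨n, rfl⟩
    exact h (hAzero n)
  have hltn : ∀ n, t n - l ≠ 0 := fun n h => hl ⟨n, sub_eq_zero.1 h⟩
  set x : ℕ → ℂ := fun n => a n * (s n - S w) with hx
  -- the numerators vanish at `w`
  have hxw : ∀ n, t n = w → x n = 0 := by
    rintro m rfl
    have h1 := tendsto_sub_mul_tsum_div_sub htinj ht hsum₁ m
    have h2 : Tendsto (fun z => G z * S z / (A z / (z - t m))) (𝓝[≠] t m)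
        (𝓝 (G (t m) * S (t m) / deriv A (t m))) :=
      ((hG.continuous.mul hS.continuous).continuousAt.tendsto.mono_left
        nhdsWithin_le_nhds).div (tendsto_div_sub_of_eq_zero hA (hAzero m)) (hAsimple m)
    have h3 := tendsto_nhds_unique (h2.congr' (by
      filter_upwards [hAne (t m)] with z hz
      rw [hGS z (hoff z hz)]
      field_simp)) h1
    rw [hx]
    dsimp only
    rw [mul_sub, ← h3, ha]
    ring
  have hsumx : ∀ z, Summable fun n => x n / (w - t n) / (z - t n) := by
    intro z
    have h1 := summable_div_sub_div_sub_of_summable_div_sub ht (hsum₁ w) w z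
    have h2 : Summable fun n => a n / (l - t n) / (z - t n) := by
      refine (hsum₂ z).neg.congr fun n => ?_
      rw [← neg_sub (t n) l, div_neg, neg_div]
    refine (h1.sub ((summable_div_sub_div_sub ht h2 w z).mul_left (S w))).congr fun n => ?_
    rw [hx]
    ring
  set k : ℕ → ℂ := fun n => x n / (w - t n) - S w * (a n / (t n - l)) with hk
  have hterm : ∀ z, z ∉ Set.range t → ∀ n,
      a n * s n / (z - t n) - S w * (z - l) * (a n / (t n - l) / (z - t n)) =
        k n + (w - z) * (x n / (w - t n) / (z - t n)) := by
    intro z hz n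
    have hzt : z - t n ≠ 0 := fun h => hz ⟨n, (sub_eq_zero.1 h).symm⟩
    have hlt := hltn n
    by_cases hn : t n = w
    · have h0 := hxw n hn
      have h1 : a n * s n = a n * S w := by
        rw [hx] at h0
        linear_combination h0
      simp only [hk, h0, h1, zero_div, mul_zero, add_zero, zero_sub]
      field_simp
      ring
    · have hwt : w - t n ≠ 0 := sub_ne_zero.2 (Ne.symm hn)
      simp only [hk, hx]
      field_simp
      ring
  have hsumk : Summable k := by
    obtain ⟨z, hz⟩ := (hAne 0).exists
    refine (((hsum₁ z).sub ((hsum₂ z).mul_left (S w * (z - l)))).sub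
      ((hsumx z).mul_left (w - z))).congr fun n => ?_
    rw [hterm z (hoff z hz) n]
    ring
  have hF : ∀ z, A z ≠ 0 → G z * (S z - S w) / A z =
      ∑' n, k n + (w - z) * ∑' n, x n / (w - t n) / (z - t n) := by
    intro z hz
    have hz' := hoff z hz
    rw [← tsum_mul_left, ← hsumk.tsum_add ((hsumx z).mul_left _),
      ← tsum_congr (hterm z hz'), (hsum₁ z).tsum_sub ((hsum₂ z).mul_left _), tsum_mul_left,
      mul_assoc, ← hGA z hz', mul_sub, hGS z hz']
    field_simp
  have hcont := continuousAt_tsum_div_sub ht (x := fun n => x n / (w - t n))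
    (fun n hn => by simp [hxw n hn]) (hsumx w)
  have hlim : Tendsto (fun z => G z * (S z - S w) / A z) (𝓝[≠] w) (𝓝 (∑' n, k n)) := by
    have h1 : Tendsto (fun z => ∑' n, k n + (w - z) * ∑' n, x n / (w - t n) / (z - t n)) (𝓝 w)
        (𝓝 (∑' n, k n + (w - w) * ∑' n, x n / (w - t n) / (w - t n))) :=
      tendsto_const_nhds.add ((tendsto_id.const_sub _).mul hcont)
    rw [sub_self, zero_mul, add_zero] at h1
    refine (h1.mono_left nhdsWithin_le_nhds).congr' ?_
    filter_upwards [hAne w] with z hz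
    rw [hF z hz]
  set e : ℕ → ℂ := fun n => if t n = w then a n * deriv S w else 0 with he
  have hesupp : ∀ m, t m = w → ∀ n ≠ m, e n = 0 := fun m hm n hn =>
    if_neg fun h => hn (htinj (h.trans hm.symm))
  have hke : ∑' n, k n = ∑' n, e n := by
    by_cases hw : w ∈ Set.range t
    · obtain ⟨m, hm⟩ := hw
      rw [tsum_eq_single m (hesupp m hm)]
      refine tendsto_nhds_unique hlim ?_
      have h1 : Tendsto (fun z => G z * slope S w z / (A z / (z - w))) (𝓝[≠] w)
          (𝓝 (G w * deriv S w / deriv A w)) :=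
        ((hG.continuous.continuousAt.tendsto.mono_left nhdsWithin_le_nhds).mul
          (hasDerivAt_iff_tendsto_slope.1 (hS w).hasDerivAt)).div
          (tendsto_div_sub_of_eq_zero hA (hm ▸ hAzero m)) (hm ▸ hAsimple m)
      have h2 : e m = G w * deriv S w / deriv A w := by
        simp only [he, if_pos hm, ha, hm]
        ring
      rw [h2]
      refine h1.congr' ?_
      filter_upwards [hAne w, self_mem_nhdsWithin] with z hz hzw
      have hzw' : z - w ≠ 0 := sub_ne_zero.2 hzw
      rw [slope_def_field]
      field_simp
    · have h0 : ∀ n, e n = 0 := fun n => if_neg fun h => hw ⟨n, h⟩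
      rw [tsum_congr h0, tsum_zero]
      refine tendsto_nhds_unique hlim ?_
      have hc := continuousAt_tsum_div_sub ht (x := fun n => a n / (t n - l))
        (fun n hn => absurd ⟨n, hn⟩ hw) (hsum₂ w)
      have h1 : Tendsto (fun z => ((z - l) * ∑' n, a n / (t n - l) / (z - t n)) * (S z - S w))
          (𝓝 w) (𝓝 (((w - l) * ∑' n, a n / (t n - l) / (w - t n)) * (S w - S w))) :=
        ((tendsto_id.sub_const l).mul hc).mul (hS.continuous.continuousAt.tendsto.sub_const _)
      rw [sub_self, mul_zero] at h1
      refine (h1.mono_left nhdsWithin_le_nhds).congr' ?_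
      filter_upwards [hAne w] with z hz
      rw [← hGA z (hoff z hz)]
      ring
  have hsume : Summable e := by
    by_cases hw : w ∈ Set.range t
    · obtain ⟨m, hm⟩ := hw
      exact (hasSum_single m (hesupp m hm)).summable
    · exact summable_zero.congr fun n => (if_neg fun h => hw ⟨n, h⟩).symm
  set d : ℕ → ℂ := fun n =>
    a n * (if t n = w then deriv S w else (s n - S w) / (t n - w)) with hd
  have hdterm : ∀ z n, z ≠ w → d n / (z - t n) =
      e n * (z - w)⁻¹ - x n / (w - t n) / (z - t n) := by
    intro z n hzw
    by_cases hn : t n = w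
    · simp [hd, he, hn, div_eq_mul_inv]
    · simp only [hd, he, hx, if_neg hn, zero_mul, zero_sub]
      rw [← neg_sub (t n) w, div_neg, neg_div, neg_neg]
      ring
  have hsumd : ∀ z, Summable fun n => d n / (z - t n) := by
    obtain ⟨z, hz⟩ := exists_ne w
    exact summable_div_sub ht (((hsume.mul_right _).sub (hsumx z)).congr
      fun n => (hdterm z n hz).symm)
  have hcd := continuousAt_tsum_div_sub ht (fun n hn => absurd ⟨n, hn⟩ hz) (hsumd z)
  have hlimz : Tendsto (fun y => G y * dslope S w y) (𝓝[≠] z) (𝓝 (G z * dslope S w z)) :=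
    (hG.continuous.mul (differentiable_dslope hS w).continuous).continuousAt.tendsto.mono_left
      nhdsWithin_le_nhds
  refine tendsto_nhds_unique hlimz (Tendsto.congr' ?_
    ((hA.continuous.continuousAt.mul hcd).tendsto.mono_left nhdsWithin_le_nhds))
  have hne : ∀ᶠ y in 𝓝[≠] z, y ≠ w := by
    by_cases h : z = w
    · rw [h]
      exact self_mem_nhdsWithin
    · exact nhdsWithin_le_nhds (isOpen_ne.mem_nhds h)
  filter_upwards [hAne z, hne] with y hy hyw
  have hyw' : y - w ≠ 0 := sub_ne_zero.2 hyw
  have h1 := hF y hy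
  rw [hke] at h1
  simp only [Pi.mul_apply]
  rw [tsum_congr fun n => hdterm y n hyw, (hsume.mul_right _).tsum_sub (hsumx y), tsum_mul_right,
    dslope_of_ne _ hyw, slope_def_field]
  rw [div_eq_iff hy] at h1
  rw [← mul_div_assoc, h1]
  field_simp
  ring

/-- Suppose `G` vanishes on `Λ` and `G/A` has the expansion
`G(z)/A(z) = (z−λ₀)Σₙ G(tₙ)/(A'(tₙ)(tₙ−λ₀)(z−tₙ))` for some `λ₀ ∈ Λ`. If `S ∈ 𝒮`,
then for every `w ∈ ℂ` the (entire extension of the) difference quotient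
`(S(z) − S(w))/(z − w)` also belongs to `𝒮`. -/
theorem stmt17 (t : ℕ → ℂ) (htinj : Function.Injective t)
    (htinf : Tendsto (fun n => ‖t n‖) atTop atTop)
    (μ : ℕ → ℝ) (hμpos : ∀ n, 0 < μ n)
    (hμsum : Summable (fun n => μ n / (‖t n‖ ^ 2 + 1)))
    (A : ℂ → ℂ) (hA : Differentiable ℂ A)
    (hAzero : ∀ n, A (t n) = 0) (hAsimple : ∀ n, deriv A (t n) ≠ 0)
    (Λ : Set ℂ) (hΛT : ∀ lam ∈ Λ, lam ∉ Set.range t)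
    (G : ℂ → ℂ) (hGd : Differentiable ℂ G) (hGΛ : ∀ lam ∈ Λ, G lam = 0)
    (lam₀ : ℂ) (hlam₀ : lam₀ ∈ Λ)
    (hexp : ∀ z ∉ Set.range t,
      G z / A z = (z - lam₀) *
        ∑' n, G (t n) / (deriv A (t n) * (t n - lam₀) * (z - t n)))
    (S : ℂ → ℂ) (hS : InSClass t μ A G S) :
    ∀ w : ℂ, ∃ Sw : ℂ → ℂ,
      (∀ z : ℂ, z ≠ w → Sw z = (S z - S w) / (z - w)) ∧ InSClass t μ A G Sw := by
  intro w
  refine ⟨dslope S w, fun z hz => by rw [dslope_of_ne _ hz, slope_def_field],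
    differentiable_dslope hS.1 w, ?_⟩
  obtain ⟨hSd, c, hc, hGS⟩ := hS
  by_cases hG0 : ∀ z, G z = 0
  · exact ⟨0, by simp [summable_zero], fun z _ => by simp [hG0]⟩
  by_cases hS0 : ∀ z, S z = 0
  · refine ⟨0, by simp [summable_zero], fun z _ => ?_⟩
    have h : S = fun _ => 0 := funext hS0
    have hd : dslope S w z = 0 := by
      by_cases hz : z = w
      · rw [hz, dslope_same, h, deriv_const]
      · rw [dslope_of_ne _ hz, slope_def_field, h, sub_self, zero_div]
    simp [hd]
  push Not at hG0 hS0
  have hA0 : ∃ z, A z ≠ 0 := by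
    by_contra! h
    exact hAsimple 0 (by rw [show A = fun _ => 0 from funext h, deriv_const])
  obtain ⟨u, ⟨hAu, hGu⟩, hSu⟩ := (((hA.eventually_ne_zero hA0 0).and
    (hGd.eventually_ne_zero hG0 0)).and (hSd.eventually_ne_zero hS0 0)).exists
  have hu : u ∉ Set.range t := by
    rintro ⟨n, rfl⟩
    exact hAu (hAzero n)
  set a : ℕ → ℂ := fun n => G (t n) / deriv A (t n) with ha
  set s : ℕ → ℂ := fun n => (starRingEnd ℂ) (c n) / (Real.sqrt (μ n) : ℂ) with hs
  have hμ : ∀ n, (Real.sqrt (μ n) : ℂ) ≠ 0 := fun n =>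
    Complex.ofReal_ne_zero.2 (Real.sqrt_pos.2 (hμpos n)).ne'
  have hterm : ∀ z n, G (t n) * (starRingEnd ℂ) (c n) /
      (deriv A (t n) * (Real.sqrt (μ n) : ℂ) * (z - t n)) = a n * s n / (z - t n) := by
    intro z n
    rw [← div_div, mul_div_mul_comm]
  have hterm' : ∀ z n, G (t n) / (deriv A (t n) * (t n - lam₀) * (z - t n)) =
      a n / (t n - lam₀) / (z - t n) := by
    intro z n
    rw [div_div, div_div, ← mul_assoc]
  simp only [hterm] at hGS
  simp only [hterm'] at hexp
  have hsum₁ : Summable fun n => a n * s n / (u - t n) := by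
    by_contra h
    have := hGS u hu
    rw [tsum_eq_zero_of_not_summable h, mul_zero] at this
    exact mul_ne_zero hGu hSu this
  have hsum₂ : Summable fun n => a n / (t n - lam₀) / (u - t n) := by
    by_contra h
    have := hexp u hu
    rw [tsum_eq_zero_of_not_summable h, mul_zero] at this
    exact div_ne_zero hGu hAu this
  have hmain := mul_dslope_eq_mul_tsum htinj htinf hA hGd hSd hAzero hAsimple (hΛT _ hlam₀)
    (fun _ => rfl) (summable_div_sub htinf hsum₁) (summable_div_sub htinf hsum₂) hGS hexp w
  set δ : ℕ → ℂ := fun n => if t n = w then deriv S w else (s n - S w) / (t n - w) with hδ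
  refine ⟨fun n => (starRingEnd ℂ) ((Real.sqrt (μ n) : ℂ) * δ n), ?_, fun z hz => ?_⟩
  · have h := summable_norm_sq_div_sub htinf hμpos hμsum
      (c := fun n => (starRingEnd ℂ) (c n)) (by simpa using hc) (S w) w
    refine summable_of_isBigO_nat h (EventuallyEq.isBigO ?_)
    filter_upwards [eventually_ne_of_tendsto_norm_atTop htinf w] with n hn
    have hμn := hμ n
    rw [RCLike.norm_conj]
    congr 2
    simp only [hδ, if_neg hn, hs]
    field_simp
  · rw [hmain z hz]
    congr 1
    refine tsum_congr fun n => ?_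
    rw [Complex.conj_conj, ← div_div, mul_div_mul_comm, mul_div_cancel_left₀ _ (hμ n)]
end

section
/- Let f be analytic in the upper half-plane ℂ⁺ and given by a convergent Cauchy series f(z) = Σₙ cₙ/(tₙ − z) with all poles tₙ in the closed lower half-plane and Σₙ |cₙ|/|tₙ| < ∞. Then f belongs to the Smirnov class in ℂ⁺. In particular, if cₙ > 0 for all n then Im f > 0 on ℂ⁺. -/
open MeasureTheory Complex

/-- The open upper half-plane. -/
def UHP : Set ℂ := {z : ℂ | 0 < z.im}

/-- `h` is a bounded analytic function on the upper half-plane. -/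
def BoundedAnalyticUHP (h : ℂ → ℂ) : Prop :=
  DifferentiableOn ℂ h UHP ∧ ∃ M : ℝ, ∀ z ∈ UHP, ‖h z‖ ≤ M

/-- `h` (bounded analytic on `ℂ⁺`) is outer: it is zero-free on `ℂ⁺` and `log|h|` is
the Poisson integral of an integrable boundary function `u`. -/
def IsOuterUHP (h : ℂ → ℂ) : Prop :=
  (∀ z ∈ UHP, h z ≠ 0) ∧
  ∃ u : ℝ → ℝ,
    (∀ z ∈ UHP, Integrable (fun s : ℝ =>
      (z.im / ((z.re - s) ^ 2 + z.im ^ 2)) * u s)) ∧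
    ∀ z ∈ UHP, Real.log ‖h z‖ =
      (1 / Real.pi) * ∫ s : ℝ, (z.im / ((z.re - s) ^ 2 + z.im ^ 2)) * u s

/-- `f` belongs to the Smirnov class in `ℂ⁺`: `f = g/h` with `g, h` bounded analytic
in `ℂ⁺` and `h` outer. -/
def SmirnovUHP (f : ℂ → ℂ) : Prop :=
  ∃ g h : ℂ → ℂ, BoundedAnalyticUHP g ∧ BoundedAnalyticUHP h ∧ IsOuterUHP h ∧
    ∀ z ∈ UHP, f z = g z / h z

open Filter Topology

/-- A bounded sequence in a real Hilbert space has a weak limit along a free ultrafilter. -/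
theorem exists_weak_limit {E : Type*} [NormedAddCommGroup E] [InnerProductSpace ℝ E]
    [CompleteSpace E] (v : ℕ → E) (M : ℝ) (hv : ∀ n, ‖v n‖ ≤ M) :
    ∃ w : E, ∀ φ : E, Tendsto (fun n => inner ℝ (v n) φ) (hyperfilter ℕ : Filter ℕ)
      (𝓝 (inner ℝ w φ)) := by
  let D := InnerProductSpace.toDual ℝ E
  let L : ℕ → WeakDual ℝ E := fun n => StrongDual.toWeakDual (D (v n))
  obtain ⟨x, -, hx⟩ := (WeakDual.isCompact_closedBall (0 : StrongDual ℝ E) M).ultrafilter_le_nhds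
    ((hyperfilter ℕ).map L) (by
      rw [le_principal_iff]
      refine Filter.mem_map.2 (Filter.univ_mem' fun n => ?_)
      change dist (D (v n)) 0 ≤ M
      rw [dist_zero_right, LinearIsometryEquiv.norm_map]
      exact hv n)
  refine ⟨D.symm (WeakDual.toStrongDual x), fun φ => ?_⟩
  rw [InnerProductSpace.toDual_symm_apply]
  exact ((WeakDual.eval_continuous φ).tendsto x).comp hx

/-- A function holomorphic on the closed upper half-plane and decaying like `‖w‖ ^ (-3/2)` has
zero integral over the real line. -/
theorem integral_real_eq_zero_of_decay {H : ℂ → ℂ} {C R₀ : ℝ}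
    (hd : DifferentiableOn ℂ H {w | 0 ≤ w.im})
    (hint : Integrable fun s : ℝ => H s)
    (hb : ∀ w : ℂ, 0 ≤ w.im → R₀ ≤ ‖w‖ → ‖H w‖ ≤ C * ‖w‖ ^ (-(3 / 2) : ℝ)) :
    ∫ s : ℝ, H s = 0 := by
  have hC : ∀ᶠ R : ℝ in atTop, 0 < R ∧ R₀ ≤ R :=
    (eventually_gt_atTop 0).and (eventually_ge_atTop R₀)
  have hlim : Tendsto (fun R : ℝ => ∫ s in (-R)..R, H s) atTop (𝓝 (∫ s : ℝ, H s)) :=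
    intervalIntegral_tendsto_integral hint tendsto_neg_atTop_atBot tendsto_id
  refine tendsto_nhds_unique hlim (squeeze_zero_norm'
    (a := fun R : ℝ => 4 * |C| * R ^ (-(1 / 2) : ℝ)) ?_ ?_)
  · filter_upwards [hC] with R ⟨hR, hR₀⟩
    have key := Complex.integral_boundary_rect_eq_zero_of_differentiableOn H (-R : ℝ) (R + R * I)
      (hd.mono (by
        intro w hw
        have := hw.2
        simp [Set.uIcc_of_le hR.le] at this
        exact this.1))
    simp only [ofReal_re, ofReal_im, add_re, add_im, mul_re, mul_im, I_re, I_im, mul_zero, mul_one,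
      sub_zero, zero_add, add_zero, ofReal_zero, zero_mul] at key
    have hbd : ∀ w : ℂ, 0 ≤ w.im → R ≤ ‖w‖ → ‖H w‖ ≤ |C| * R ^ (-(3 / 2) : ℝ) := by
      intro w hw hRw
      refine (hb w hw (hR₀.trans hRw)).trans ?_
      refine mul_le_mul (le_abs_self C) ?_ (by positivity) (abs_nonneg C)
      exact Real.rpow_le_rpow_of_nonpos hR hRw (by norm_num)
    have h1 : ‖∫ x in (-R)..R, H (x + R * I)‖ ≤ |C| * R ^ (-(3 / 2) : ℝ) * |R - -R| := by
      refine intervalIntegral.norm_integral_le_of_norm_le_const fun x _ => hbd _ (by simp [hR.le]) ?_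
      refine le_trans ?_ (abs_im_le_norm _)
      simp [abs_of_pos hR]
    have h2 : ∀ a : ℝ, |a| = R → ‖∫ y in (0 : ℝ)..R, H (a + y * I)‖ ≤
        |C| * R ^ (-(3 / 2) : ℝ) * |R - 0| := by
      intro a ha
      refine intervalIntegral.norm_integral_le_of_norm_le_const fun y hy => hbd _ ?_ ?_
      · rw [Set.uIoc_of_le hR.le] at hy
        simp [hy.1.le]
      · refine le_trans ?_ (abs_re_le_norm _)
        simp [ha]
    have h2a := h2 R (abs_of_pos hR)
    have h2b := h2 (-R) (by simp [abs_of_pos hR])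
    have e : ∫ x in (-R)..R, H x = (∫ x in (-R)..R, H (x + R * I)) -
        I • (∫ y in (0 : ℝ)..R, H (R + y * I)) + I • ∫ y in (0 : ℝ)..R, H ((-R : ℝ) + y * I) := by
      linear_combination key
    rw [e]
    have hp : R ^ (-(3 / 2) : ℝ) * R = R ^ (-(1 / 2) : ℝ) := by
      rw [← Real.rpow_add_one hR.ne']; norm_num
    have ha1 : |R - -R| = 2 * R := by rw [abs_of_pos] <;> linarith
    have ha2 : |R - 0| = R := by rw [sub_zero, abs_of_pos hR]
    rw [ha1] at h1
    rw [ha2] at h2a h2b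
    refine (norm_add_le _ _).trans ((add_le_add_left (norm_sub_le _ _) _).trans ?_)
    rw [norm_smul, norm_smul, norm_I, one_mul, one_mul, ← hp]
    linarith
  · have := (tendsto_rpow_neg_atTop (y := 1 / 2) (by norm_num)).const_mul (4 * |C|)
    simpa using this

theorem poissonKernel_le {z : ℂ} (hz : 0 < z.im) (s : ℝ) :
    z.im / ((z.re - s) ^ 2 + z.im ^ 2) ≤
      z.im * (2 + (1 + 2 * z.re ^ 2) / z.im ^ 2) * (1 + s ^ 2)⁻¹ := by
  rw [← div_eq_mul_inv, div_le_div_iff₀ (by positivity) (by positivity), mul_assoc]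
  refine mul_le_mul_of_nonneg_left ?_ hz.le
  have e : (1 + 2 * z.re ^ 2) / z.im ^ 2 * z.im ^ 2 = 1 + 2 * z.re ^ 2 := by field_simp
  have : 0 ≤ (1 + 2 * z.re ^ 2) / z.im ^ 2 * (z.re - s) ^ 2 := by positivity
  nlinarith [sq_nonneg (2 * z.re - s), sq_nonneg z.im]

theorem continuous_poissonKernel {z : ℂ} (hz : 0 < z.im) :
    Continuous fun s : ℝ => z.im / ((z.re - s) ^ 2 + z.im ^ 2) :=
  continuous_const.div (by fun_prop) fun s => by positivity

theorem integrable_poissonKernel {z : ℂ} (hz : 0 < z.im) :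
    Integrable fun s : ℝ => z.im / ((z.re - s) ^ 2 + z.im ^ 2) := by
  refine (integrable_inv_one_add_sq.const_mul
    (z.im * (2 + (1 + 2 * z.re ^ 2) / z.im ^ 2))).mono'
    (continuous_poissonKernel hz).aestronglyMeasurable (ae_of_all _ fun s => ?_)
  rw [Real.norm_of_nonneg (by positivity)]
  exact poissonKernel_le hz s

theorem integral_poissonKernel {z : ℂ} (hz : 0 < z.im) :
    ∫ s : ℝ, z.im / ((z.re - s) ^ 2 + z.im ^ 2) = Real.pi := by
  have h := ProbabilityTheory.integral_cauchyPDFReal_eq_one z.re (γ := z.im.toNNReal)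
    (Real.toNNReal_pos.2 hz).ne'
  simp only [ProbabilityTheory.cauchyPDFReal, Real.coe_toNNReal _ hz.le, mul_assoc] at h
  rw [integral_const_mul, inv_mul_eq_one₀ Real.pi_ne_zero] at h
  rw [h]
  congr 1 with s
  rw [div_eq_mul_inv]
  congr 2
  ring

theorem integrable_poissonKernel_mul {G : ℂ → ℂ} {C : ℝ} {z : ℂ} (hz : 0 < z.im)
    (hd : DifferentiableOn ℂ G {w | 0 ≤ w.im})
    (hb : ∀ w : ℂ, 0 ≤ w.im → ‖G w‖ ≤ C * (1 + ‖w‖) ^ (1 / 2 : ℝ)) :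
    Integrable fun s : ℝ => ((z.im / ((z.re - s) ^ 2 + z.im ^ 2) : ℝ) : ℂ) * G s := by
  have hG : Continuous fun s : ℝ => G s :=
    hd.continuousOn.comp_continuous continuous_ofReal (fun s => by simp)
  have hK := integrable_one_add_norm (E := ℝ) (μ := volume) (r := 3 / 2) (by norm_num)
  refine (hK.const_mul (z.im * (2 + (1 + 2 * z.re ^ 2) / z.im ^ 2) * 2 * C)).mono'
    ((continuous_ofReal.comp (continuous_poissonKernel hz)).mul hG).aestronglyMeasurable
    (ae_of_all _ fun s => ?_)
  rw [norm_mul, norm_real, Real.norm_of_nonneg (by positivity)]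
  have h1 := poissonKernel_le hz s
  have h2 := hb s (by simp)
  rw [norm_real] at h2
  have hs : 0 < 1 + ‖s‖ := by positivity
  have h3 : (1 + s ^ 2)⁻¹ ≤ 2 * (1 + ‖s‖) ^ (-2 : ℝ) := by
    rw [Real.rpow_neg hs.le, Real.rpow_two, ← div_eq_mul_inv, inv_le_comm₀ (by positivity)
      (by positivity), inv_div, div_le_iff₀ (by positivity), Real.norm_eq_abs]
    nlinarith [sq_abs s, sq_nonneg (|s| - 1)]
  have hC : 0 ≤ C := by
    by_contra! h
    have := (norm_nonneg _).trans h2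
    have : 0 < (1 + ‖s‖) ^ (1 / 2 : ℝ) := by positivity
    nlinarith
  calc _ ≤ (z.im * (2 + (1 + 2 * z.re ^ 2) / z.im ^ 2) * (2 * (1 + ‖s‖) ^ (-2 : ℝ))) *
        (C * (1 + ‖s‖) ^ (1 / 2 : ℝ)) := by
        refine mul_le_mul (h1.trans ?_) h2 (norm_nonneg _) (by positivity)
        exact mul_le_mul_of_nonneg_left h3 (by positivity)
    _ = z.im * (2 + (1 + 2 * z.re ^ 2) / z.im ^ 2) * 2 * C *
        ((1 + ‖s‖) ^ (-2 : ℝ) * (1 + ‖s‖) ^ (1 / 2 : ℝ)) := by ring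
    _ = _ := by rw [← Real.rpow_add hs]; norm_num

/-- Poisson's formula for functions of growth at most `‖w‖ ^ (1/2)`. -/
theorem integral_poissonKernel_mul {G : ℂ → ℂ} {C : ℝ} {z : ℂ} (hz : 0 < z.im)
    (hd : DifferentiableOn ℂ G {w | 0 ≤ w.im})
    (hb : ∀ w : ℂ, 0 ≤ w.im → ‖G w‖ ≤ C * (1 + ‖w‖) ^ (1 / 2 : ℝ)) :
    ∫ s : ℝ, ((z.im / ((z.re - s) ^ 2 + z.im ^ 2) : ℝ) : ℂ) * G s = Real.pi * G z := by
  have hI := integrable_poissonKernel_mul hz hd hb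
  have hI' : Integrable fun s : ℝ => ((z.im / ((z.re - s) ^ 2 + z.im ^ 2) : ℝ) : ℂ) * G z :=
    (integrable_poissonKernel hz).ofReal.mul_const _
  have hnhds : {w : ℂ | 0 ≤ w.im} ∈ 𝓝 z :=
    mem_of_superset ((isOpen_lt continuous_const continuous_im).mem_nhds hz)
      fun w (hw : 0 < w.im) => hw.le
  have hconj : ∀ w : ℂ, 0 ≤ w.im → w - starRingEnd ℂ z ≠ 0 := by
    intro w hw h
    have := congrArg im h
    simp at this
    linarith
  have e : ∀ s : ℝ, z.im * dslope G z s / (s - starRingEnd ℂ z) =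
      ((z.im / ((z.re - s) ^ 2 + z.im ^ 2) : ℝ) : ℂ) * G s -
      ((z.im / ((z.re - s) ^ 2 + z.im ^ 2) : ℝ) : ℂ) * G z := by
    intro s
    have hsz : (s : ℂ) ≠ z := fun h => hz.ne' (by rw [← h, ofReal_im])
    have h1 : (s : ℂ) - z ≠ 0 := sub_ne_zero.2 hsz
    have h2 := hconj s (by simp)
    have h3 : (((z.re - s) ^ 2 + z.im ^ 2 : ℝ) : ℂ) = (s - z) * (s - starRingEnd ℂ z) := by
      rw [← re_add_im z]
      simp only [map_add, map_mul, conj_ofReal, conj_I]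
      push_cast
      simp only [add_re, ofReal_re, re_ofReal_mul, I_re, mul_zero, add_zero, add_im, ofReal_im,
        im_ofReal_mul, I_im, mul_one, zero_add]
      linear_combination (z.im : ℂ) ^ 2 * I_sq
    rw [dslope_of_ne _ hsz, slope_def_field, ofReal_div, h3]
    field_simp
  have hH := integral_real_eq_zero_of_decay (R₀ := 1 + 2 * ‖z‖) (C := 16 * C * z.im)
    (H := fun w => z.im * dslope G z w / (w - starRingEnd ℂ z)) ?_ ?_ ?_
  · simp_rw [e] at hH
    rw [integral_sub hI hI', integral_mul_const, integral_complex_ofReal,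
      integral_poissonKernel hz] at hH
    exact sub_eq_zero.1 hH
  · exact ((((Complex.differentiableOn_dslope hnhds).2 hd).const_mul _)).div (by fun_prop)
      fun w hw => hconj w hw
  · simp_rw [e]
    exact hI.sub hI'
  · intro w hw hR
    have hw0 : 0 < ‖w‖ := by linarith [norm_nonneg z]
    have hwz : w ≠ z := by
      rintro rfl
      linarith
    have h1 : ‖w‖ / 2 ≤ ‖w - z‖ := by linarith [norm_sub_norm_le w z]
    have h2 : ‖w‖ / 2 ≤ ‖w - starRingEnd ℂ z‖ := by
      have := norm_sub_norm_le w (starRingEnd ℂ z)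
      rw [norm_conj] at this
      linarith
    have hC : 0 ≤ C := by
      by_contra! h
      have := (norm_nonneg _).trans (hb w hw)
      have : 0 < (1 + ‖w‖) ^ (1 / 2 : ℝ) := by positivity
      nlinarith
    have hbd : ∀ v : ℂ, 0 ≤ v.im → ‖v‖ ≤ ‖w‖ → ‖G v‖ ≤ C * (2 * ‖w‖ ^ (1 / 2 : ℝ)) := by
      intro v hv hvw
      refine (hb v hv).trans (mul_le_mul_of_nonneg_left ?_ hC)
      calc (1 + ‖v‖) ^ (1 / 2 : ℝ) ≤ (4 * ‖w‖) ^ (1 / 2 : ℝ) := by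
            apply Real.rpow_le_rpow (by positivity) _ (by norm_num)
            linarith [norm_nonneg z]
        _ = 2 * ‖w‖ ^ (1 / 2 : ℝ) := by
            rw [Real.mul_rpow (by norm_num) hw0.le, ← Real.sqrt_eq_rpow, ← Real.sqrt_eq_rpow,
              show (4 : ℝ) = 2 ^ 2 by norm_num, Real.sqrt_sq (by norm_num)]
    have hn : ‖G w - G z‖ ≤ C * (4 * ‖w‖ ^ (1 / 2 : ℝ)) := by
      linarith [norm_sub_le (G w) (G z), hbd w hw le_rfl,
        hbd z hz.le (by linarith [norm_nonneg z])]
    rw [dslope_of_ne _ hwz, slope_def_field, norm_div, norm_mul, norm_div, norm_real,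
      Real.norm_of_nonneg hz.le]
    calc _ ≤ z.im * (C * (4 * ‖w‖ ^ (1 / 2 : ℝ)) / (‖w‖ / 2)) / (‖w‖ / 2) := by gcongr
      _ = 16 * C * z.im * (‖w‖ ^ (1 / 2 : ℝ) / ‖w‖ ^ 2) := by field_simp; ring
      _ = _ := by
        rw [← Real.rpow_natCast, ← Real.rpow_sub hw0]
        norm_num

theorem integrable_poissonKernel_mul_re {G : ℂ → ℂ} {C : ℝ} {z : ℂ} (hz : 0 < z.im)
    (hd : DifferentiableOn ℂ G {w | 0 ≤ w.im})
    (hb : ∀ w : ℂ, 0 ≤ w.im → ‖G w‖ ≤ C * (1 + ‖w‖) ^ (1 / 2 : ℝ)) :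
    Integrable fun s : ℝ => (z.im / ((z.re - s) ^ 2 + z.im ^ 2)) * (G s).re := by
  simpa only [RCLike.re_to_complex, re_ofReal_mul] using (integrable_poissonKernel_mul hz hd hb).re

theorem integral_poissonKernel_mul_re {G : ℂ → ℂ} {C : ℝ} {z : ℂ} (hz : 0 < z.im)
    (hd : DifferentiableOn ℂ G {w | 0 ≤ w.im})
    (hb : ∀ w : ℂ, 0 ≤ w.im → ‖G w‖ ≤ C * (1 + ‖w‖) ^ (1 / 2 : ℝ)) :
    ∫ s : ℝ, (z.im / ((z.re - s) ^ 2 + z.im ^ 2)) * (G s).re = Real.pi * (G z).re := by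
  have h := reCLM.integral_comp_comm (integrable_poissonKernel_mul hz hd hb)
  rw [integral_poissonKernel_mul hz hd hb] at h
  simpa only [reCLM_apply, re_ofReal_mul] using h

theorem integral_poissonKernel_mul_re_sq_le {G : ℂ → ℂ} {C : ℝ} {z : ℂ} (hz : 0 < z.im)
    (hd : DifferentiableOn ℂ G {w | 0 ≤ w.im})
    (hb : ∀ w : ℂ, 0 ≤ w.im → ‖G w‖ ^ 2 ≤ C * (1 + ‖w‖) ^ (1 / 2 : ℝ))
    (him : ∀ s : ℝ, |(G s).im| ≤ Real.pi) :
    Integrable (fun s : ℝ => (z.im / ((z.re - s) ^ 2 + z.im ^ 2)) * (G s).re ^ 2) ∧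
    ∫ s : ℝ, (z.im / ((z.re - s) ^ 2 + z.im ^ 2)) * (G s).re ^ 2 ≤
      Real.pi * ‖G z‖ ^ 2 + Real.pi * Real.pi ^ 2 := by
  have hb2 : ∀ w : ℂ, 0 ≤ w.im → ‖G w ^ 2‖ ≤ C * (1 + ‖w‖) ^ (1 / 2 : ℝ) := by
    intro w hw
    rw [norm_pow]
    exact hb w hw
  have h1 := integrable_poissonKernel_mul_re (G := fun w => G w ^ 2) hz (hd.pow 2) hb2
  have h2 := integral_poissonKernel_mul_re (G := fun w => G w ^ 2) hz (hd.pow 2) hb2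
  have h3 := (integrable_poissonKernel hz).mul_const (Real.pi ^ 2)
  have hle : ∀ s : ℝ, (z.im / ((z.re - s) ^ 2 + z.im ^ 2)) * (G s).re ^ 2 ≤
      (z.im / ((z.re - s) ^ 2 + z.im ^ 2)) * (G s ^ 2).re +
      (z.im / ((z.re - s) ^ 2 + z.im ^ 2)) * Real.pi ^ 2 := by
    intro s
    rw [← mul_add]
    refine mul_le_mul_of_nonneg_left ?_ (by positivity)
    have := sq_le_sq' (neg_le_of_abs_le (him s)) (le_of_abs_le (him s))
    rw [pow_two (G s), mul_re]
    linarith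
  have hG : Continuous fun s : ℝ => G s :=
    hd.continuousOn.comp_continuous continuous_ofReal (fun s => by simp)
  have hI : Integrable (fun s : ℝ => (z.im / ((z.re - s) ^ 2 + z.im ^ 2)) * (G s).re ^ 2) := by
    refine (h1.add h3).mono' ((continuous_poissonKernel hz).mul
      ((continuous_re.comp hG).pow 2)).aestronglyMeasurable (ae_of_all _ fun s => ?_)
    rw [Real.norm_of_nonneg (by positivity)]
    exact hle s
  refine ⟨hI, (integral_mono hI (h1.add h3) hle).trans ?_⟩
  simp only [Pi.add_apply]
  rw [integral_add h1 h3, h2, integral_mul_const, integral_poissonKernel hz]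
  refine add_le_add_left (mul_le_mul_of_nonneg_left ?_ Real.pi_pos.le) _
  rw [← norm_pow]
  exact re_le_norm _

/-- A holomorphic function with bounded imaginary part (and moderate growth) has as real part the
Poisson integral of a boundary function, obtained as a weak `L²` limit along the lines
`im z = ε`. -/
theorem exists_poisson_representation {Q : ℂ → ℂ} (hQ : DifferentiableOn ℂ Q UHP)
    (him : ∀ z ∈ UHP, |(Q z).im| ≤ Real.pi)
    (hg : ∀ ε : ℝ, 0 < ε → ∃ C : ℝ, ∀ z : ℂ, ε ≤ z.im →
      ‖Q z‖ ^ 2 ≤ C * (1 + ‖z‖) ^ (1 / 2 : ℝ)) :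
    ∃ u : ℝ → ℝ,
      (∀ z ∈ UHP, Integrable fun s : ℝ => (z.im / ((z.re - s) ^ 2 + z.im ^ 2)) * u s) ∧
      ∀ z ∈ UHP, (Q z).re =
        (1 / Real.pi) * ∫ s : ℝ, (z.im / ((z.re - s) ^ 2 + z.im ^ 2)) * u s := by
  let ε : ℕ → ℝ := fun n => 1 / ((n : ℝ) + 1)
  have hε : ∀ n, 0 < ε n := fun n => by positivity
  have hε0 : Tendsto ε atTop (𝓝 0) := tendsto_one_div_add_atTop_nhds_zero_nat
  let q : ℕ → ℂ → ℂ := fun n w => Q (w + ε n * I)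
  have hmem : ∀ n, ∀ w : ℂ, 0 ≤ w.im → ε n ≤ (w + ε n * I).im := by
    intro n w hw
    simpa using hw
  have hUHP : ∀ n, ∀ w : ℂ, 0 ≤ w.im → w + ε n * I ∈ UHP := fun n w hw =>
    (hε n).trans_le (hmem n w hw)
  have hqd : ∀ n, DifferentiableOn ℂ (q n) {w | 0 ≤ w.im} := fun n =>
    hQ.comp (by fun_prop) fun w hw => hUHP n w hw
  have hqb : ∀ n, ∃ C : ℝ, ∀ w : ℂ, 0 ≤ w.im → ‖q n w‖ ^ 2 ≤ C * (1 + ‖w‖) ^ (1 / 2 : ℝ) := by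
    intro n
    obtain ⟨C, hC⟩ := hg (ε n) (hε n)
    refine ⟨|C| * (1 + ε n) ^ (1 / 2 : ℝ), fun w hw => (hC _ (hmem n w hw)).trans ?_⟩
    have h1 := norm_add_le w (ε n * I)
    rw [norm_mul, norm_I, norm_real, Real.norm_of_nonneg (hε n).le, mul_one] at h1
    rw [mul_assoc, ← Real.mul_rpow (by linarith [hε n]) (by positivity)]
    refine mul_le_mul (le_abs_self C) (Real.rpow_le_rpow (by positivity) ?_ (by norm_num))
      (by positivity) (abs_nonneg C)
    nlinarith [mul_nonneg (hε n).le (norm_nonneg w)]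
  have hqb1 : ∀ n, ∃ C : ℝ, ∀ w : ℂ, 0 ≤ w.im → ‖q n w‖ ≤ C * (1 + ‖w‖) ^ (1 / 2 : ℝ) := by
    intro n
    obtain ⟨C, hC⟩ := hqb n
    refine ⟨1 + C, fun w hw => ?_⟩
    have h1 : (1 : ℝ) ≤ (1 + ‖w‖) ^ (1 / 2 : ℝ) :=
      Real.one_le_rpow (by linarith [norm_nonneg w]) (by norm_num)
    nlinarith [hC w hw, sq_nonneg (‖q n w‖ - 1), norm_nonneg (q n w)]
  have hqlim : ∀ z ∈ UHP, Tendsto (fun n => q n z) atTop (𝓝 (Q z)) := by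
    intro z hz
    have hc : ContinuousAt Q z := (hQ.differentiableAt
      ((isOpen_lt continuous_const continuous_im).mem_nhds hz)).continuousAt
    refine hc.tendsto.comp ?_
    have : Tendsto (fun n => z + (ε n : ℂ) * I) atTop (𝓝 (z + ((0 : ℝ) : ℂ) * I)) :=
      tendsto_const_nhds.add (((continuous_ofReal.tendsto 0).comp hε0).mul_const I)
    simpa using this
  have hI : (0 : ℝ) < I.im := by simp
  let k : ℂ → ℝ → ℝ := fun z s => z.im / ((z.re - s) ^ 2 + z.im ^ 2)
  have hk0 : ∀ z ∈ UHP, ∀ s, 0 < k z s := fun z (hz : 0 < z.im) s => by positivity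
  have hkc : ∀ z ∈ UHP, Continuous (k z) := fun z hz => continuous_poissonKernel hz
  have hsq : ∀ s, 0 < √(k I s) := fun s => Real.sqrt_pos.2 (hk0 I hI s)
  let v : ℕ → ℝ → ℝ := fun n s => √(k I s) * (q n s).re
  have hvsq : ∀ n s, v n s ^ 2 = k I s * (q n s).re ^ 2 := fun n s => by
    rw [mul_pow, Real.sq_sqrt (hk0 I hI s).le]
  obtain ⟨B, hB⟩ := ((hqlim I hI).norm.pow 2).bddAbove_range
  have hv2 : ∀ n, Integrable (fun s => v n s ^ 2) ∧
      ∫ s, v n s ^ 2 ≤ Real.pi * B + Real.pi * Real.pi ^ 2 := by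
    intro n
    obtain ⟨C, hC⟩ := hqb n
    have h := integral_poissonKernel_mul_re_sq_le hI (hqd n) hC
      fun s => him _ (hUHP n s (by simp))
    simp_rw [hvsq]
    refine ⟨h.1, h.2.trans ?_⟩
    have := mul_le_mul_of_nonneg_left (hB ⟨n, rfl⟩) Real.pi_pos.le
    linarith
  have hqc : ∀ n, Continuous fun s : ℝ => q n s := fun n =>
    (hqd n).continuousOn.comp_continuous continuous_ofReal (fun s => by simp)
  have hvL : ∀ n, MemLp (v n) 2 := fun n =>
    (memLp_two_iff_integrable_sq (((hkc I hI).sqrt).mul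
      (continuous_re.comp (hqc n))).aestronglyMeasurable).2 (hv2 n).1
  let φ : ℂ → ℝ → ℝ := fun z s => k z s / √(k I s)
  have hφL : ∀ z ∈ UHP, MemLp (φ z) 2 := by
    intro z hz
    have hm : AEStronglyMeasurable (φ z) volume :=
      ((hkc z hz).div (hkc I hI).sqrt fun s => (hsq s).ne').aestronglyMeasurable
    refine (memLp_two_iff_integrable_sq hm).2 ?_
    refine ((integrable_poissonKernel hz).const_mul
      (z.im * (2 + (1 + 2 * z.re ^ 2) / z.im ^ 2))).mono' (hm.pow 2) (ae_of_all _ fun s => ?_)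
    rw [Real.norm_of_nonneg (by positivity), div_pow, Real.sq_sqrt (hk0 I hI s).le,
      div_le_iff₀ (hk0 I hI s)]
    have h1 := mul_le_mul_of_nonneg_left (poissonKernel_le hz s) (hk0 z hz s).le
    have h2 : k I s = (1 + s ^ 2)⁻¹ := by
      simp [k, add_comm]
    rw [h2]
    change k z s ^ 2 ≤ _ * k z s * _
    linarith
  have hnorm : ∀ n, ‖(hvL n).toLp (v n)‖ ≤ √(Real.pi * B + Real.pi * Real.pi ^ 2) := by
    intro n
    refine Real.le_sqrt_of_sq_le ?_
    rw [← real_inner_self_eq_norm_sq, L2.inner_def]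
    refine le_trans (le_of_eq (integral_congr_ae ?_)) (hv2 n).2
    filter_upwards [(hvL n).coeFn_toLp] with s hs
    rw [hs]
    simp [pow_two]
  obtain ⟨w, hw⟩ := exists_weak_limit (fun n => (hvL n).toLp (v n)) _ hnorm
  have hku : ∀ z s, k z s * (w s / √(k I s)) = w s * φ z s := fun z s => by
    simp only [φ]
    ring
  refine ⟨fun s => w s / √(k I s), fun z hz => ?_, fun z hz => ?_⟩
  · change Integrable fun s => k z s * (w s / √(k I s))
    simp_rw [hku]
    exact (Lp.memLp w).integrable_mul (hφL z hz)
  · change _ = _ * ∫ s, k z s * (w s / √(k I s))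
    have h1 := hw ((hφL z hz).toLp (φ z))
    have h2 : inner ℝ w ((hφL z hz).toLp (φ z)) = ∫ s, k z s * (w s / √(k I s)) := by
      rw [L2.inner_def]
      refine integral_congr_ae ?_
      filter_upwards [(hφL z hz).coeFn_toLp] with s hs
      rw [hs, hku]
      simp [mul_comm]
    have h3 : ∀ n, inner ℝ ((hvL n).toLp (v n)) ((hφL z hz).toLp (φ z)) =
        Real.pi * (q n z).re := by
      intro n
      obtain ⟨C, hC⟩ := hqb1 n
      rw [← integral_poissonKernel_mul_re hz (hqd n) hC, L2.inner_def]
      refine integral_congr_ae ?_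
      filter_upwards [(hφL z hz).coeFn_toLp, (hvL n).coeFn_toLp] with s hs hs'
      rw [hs, hs']
      change _ = k z s * _
      have := (hsq s).ne'
      simp only [φ, v, RCLike.inner_apply, conj_trivial]
      field_simp
    simp_rw [h3] at h1
    have h4 : Tendsto (fun n => Real.pi * (q n z).re) atTop (𝓝 (Real.pi * (Q z).re)) :=
      ((continuous_re.tendsto _).comp (hqlim z hz)).const_mul _
    rw [← h2, ← tendsto_nhds_unique (h4.mono_left Nat.hyperfilter_le_atTop) h1]
    field_simp

theorem isOuterUHP_inv_of_one_le_im {P : ℂ → ℂ} (hP : DifferentiableOn ℂ P UHP)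
    (him : ∀ z ∈ UHP, 1 ≤ (P z).im)
    (hg : ∀ ε : ℝ, 0 < ε → ∃ C : ℝ, ∀ z : ℂ, ε ≤ z.im → ‖P z‖ ≤ C * (1 + ‖z‖)) :
    IsOuterUHP fun z => (P z)⁻¹ := by
  have hP1 : ∀ z ∈ UHP, 1 ≤ ‖P z‖ := fun z hz =>
    (him z hz).trans ((le_abs_self _).trans (abs_im_le_norm _))
  obtain ⟨u, hu, hu'⟩ := exists_poisson_representation (Q := fun z => log (P z))
    (hP.clog fun z hz => Or.inr (by linarith [him z hz] : (0 : ℝ) < (P z).im).ne')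
    (fun z _ => by simpa only [log_im] using abs_arg_le_pi _) (by
      intro ε hε
      obtain ⟨C, hC⟩ := hg ε hε
      refine ⟨16 * |C| ^ (1 / 2 : ℝ) + Real.pi ^ 2, fun z hz => ?_⟩
      have h1 := hP1 z (hε.trans_le hz)
      have h0 : 0 ≤ Real.log ‖P z‖ := Real.log_nonneg h1
      have h2 : Real.log ‖P z‖ ^ 2 ≤ 16 * ‖P z‖ ^ (1 / 2 : ℝ) := by
        have := Real.log_le_rpow_div (norm_nonneg (P z)) (ε := 1 / 4) (by norm_num)
        calc Real.log ‖P z‖ ^ 2 ≤ (‖P z‖ ^ (1 / 4 : ℝ) / (1 / 4)) ^ 2 :=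
              pow_le_pow_left₀ h0 this 2
          _ = 16 * (‖P z‖ ^ (1 / 4 : ℝ)) ^ 2 := by ring
          _ = _ := by rw [← Real.rpow_mul_natCast (norm_nonneg _)]; norm_num
      have h3 : ‖P z‖ ^ (1 / 2 : ℝ) ≤ |C| ^ (1 / 2 : ℝ) * (1 + ‖z‖) ^ (1 / 2 : ℝ) := by
        rw [← Real.mul_rpow (abs_nonneg C) (by positivity)]
        refine Real.rpow_le_rpow (norm_nonneg _) ((hC z hz).trans ?_) (by norm_num)
        exact mul_le_mul_of_nonneg_right (le_abs_self C) (by positivity)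
      have h4 : (1 : ℝ) ≤ (1 + ‖z‖) ^ (1 / 2 : ℝ) :=
        Real.one_le_rpow (by linarith [norm_nonneg z]) (by norm_num)
      have h5 := sq_le_sq' (neg_le_of_abs_le (abs_arg_le_pi (P z)))
        (le_of_abs_le (abs_arg_le_pi (P z)))
      have h6 : ‖log (P z)‖ ^ 2 = Real.log ‖P z‖ ^ 2 + arg (P z) ^ 2 := by
        rw [← normSq_eq_norm_sq, normSq_apply, log_re, log_im]
        ring
      rw [h6]
      nlinarith [mul_le_mul_of_nonneg_left h4 (sq_nonneg Real.pi)])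
  refine ⟨fun z hz => inv_ne_zero (norm_pos_iff.1 (by linarith [hP1 z hz])), fun s => -u s,
    fun z hz => ?_, fun z hz => ?_⟩
  · simp only [mul_neg]
    exact (hu z hz).neg
  · have := hu' z hz
    rw [log_re] at this
    simp only [mul_neg]
    rw [integral_neg, mul_neg, ← this, norm_inv, Real.log_inv]

theorem smirnovUHP_of_im_nonneg {F : ℂ → ℂ} (hF : DifferentiableOn ℂ F UHP)
    (him : ∀ z ∈ UHP, 0 ≤ (F z).im)
    (hg : ∀ ε : ℝ, 0 < ε → ∃ C : ℝ, ∀ z : ℂ, ε ≤ z.im → ‖F z‖ ≤ C * (1 + ‖z‖)) :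
    SmirnovUHP F := by
  have hd : DifferentiableOn ℂ (fun z => F z + I) UHP := hF.add_const I
  have him' : ∀ z ∈ UHP, 1 ≤ (F z + I).im := fun z hz => by
    simpa using him z hz
  have h1 : ∀ z ∈ UHP, 1 ≤ ‖F z + I‖ := fun z hz =>
    (him' z hz).trans ((le_abs_self _).trans (abs_im_le_norm _))
  have h0 : ∀ z ∈ UHP, F z + I ≠ 0 := fun z hz => norm_pos_iff.1 (by linarith [h1 z hz])
  have hb : ∀ z ∈ UHP, ‖(F z + I)⁻¹‖ ≤ 1 := fun z hz => by
    rw [norm_inv]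
    exact inv_le_one_of_one_le₀ (h1 z hz)
  refine ⟨fun z => F z * (F z + I)⁻¹, fun z => (F z + I)⁻¹, ⟨hF.mul (hd.inv h0), 2, fun z hz => ?_⟩,
    ⟨hd.inv h0, 1, hb⟩, isOuterUHP_inv_of_one_le_im hd him' ?_, fun z hz => ?_⟩
  · have e : F z * (F z + I)⁻¹ = 1 - I * (F z + I)⁻¹ := by
      have := h0 z hz
      field_simp
      ring
    change ‖F z * (F z + I)⁻¹‖ ≤ 2
    rw [e]
    refine (norm_sub_le _ _).trans ?_
    rw [norm_one, norm_mul, norm_I, one_mul]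
    linarith [hb z hz]
  · intro ε hε
    obtain ⟨C, hC⟩ := hg ε hε
    refine ⟨C + 1, fun z hz => (norm_add_le _ _).trans ?_⟩
    rw [norm_I]
    linarith [hC z hz, norm_nonneg z]
  · have := h0 z hz
    field_simp

theorem BoundedAnalyticUHP.add {g h : ℂ → ℂ} (hg : BoundedAnalyticUHP g)
    (hh : BoundedAnalyticUHP h) : BoundedAnalyticUHP fun z => g z + h z := by
  obtain ⟨hgd, A, hA⟩ := hg
  obtain ⟨hhd, B, hB⟩ := hh
  exact ⟨hgd.add hhd, A + B, fun z hz => (norm_add_le _ _).trans (add_le_add (hA z hz) (hB z hz))⟩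

theorem BoundedAnalyticUHP.mul {g h : ℂ → ℂ} (hg : BoundedAnalyticUHP g)
    (hh : BoundedAnalyticUHP h) : BoundedAnalyticUHP fun z => g z * h z := by
  obtain ⟨hgd, A, hA⟩ := hg
  obtain ⟨hhd, B, hB⟩ := hh
  refine ⟨hgd.mul hhd, A * B, fun z hz => ?_⟩
  rw [norm_mul]
  exact mul_le_mul (hA z hz) (hB z hz) (norm_nonneg _) ((norm_nonneg _).trans (hA z hz))

theorem IsOuterUHP.mul {g h : ℂ → ℂ} (hg : IsOuterUHP g) (hh : IsOuterUHP h) :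
    IsOuterUHP fun z => g z * h z := by
  obtain ⟨hg0, u, hu, hu'⟩ := hg
  obtain ⟨hh0, v, hv, hv'⟩ := hh
  refine ⟨fun z hz => mul_ne_zero (hg0 z hz) (hh0 z hz), fun s => u s + v s, fun z hz => ?_,
    fun z hz => ?_⟩
  · simp only [mul_add]
    exact (hu z hz).add (hv z hz)
  · simp only [mul_add]
    rw [integral_add (hu z hz) (hv z hz), mul_add, ← hu' z hz, ← hv' z hz, norm_mul,
      Real.log_mul (norm_ne_zero_iff.2 (hg0 z hz)) (norm_ne_zero_iff.2 (hh0 z hz))]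

theorem SmirnovUHP.add {f₁ f₂ : ℂ → ℂ} (h₁ : SmirnovUHP f₁) (h₂ : SmirnovUHP f₂) :
    SmirnovUHP fun z => f₁ z + f₂ z := by
  obtain ⟨g, h, hg, hh, ho, e⟩ := h₁
  obtain ⟨g', h', hg', hh', ho', e'⟩ := h₂
  refine ⟨fun z => g z * h' z + h z * g' z, fun z => h z * h' z, (hg.mul hh').add (hh.mul hg'),
    hh.mul hh', ho.mul ho', fun z hz => ?_⟩
  simp only [e z hz, e' z hz]
  rw [div_add_div _ _ (ho.1 z hz) (ho'.1 z hz)]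

theorem SmirnovUHP.const_mul {f : ℂ → ℂ} (hf : SmirnovUHP f) (a : ℂ) :
    SmirnovUHP fun z => a * f z := by
  obtain ⟨g, h, hg, hh, ho, e⟩ := hf
  refine ⟨fun z => a * g z, h, BoundedAnalyticUHP.mul ⟨differentiableOn_const a, ‖a‖,
    fun _ _ => le_rfl⟩ hg, hh, ho, fun z hz => ?_⟩
  simp only [e z hz, mul_div_assoc]

theorem SmirnovUHP.congr {f₁ f₂ : ℂ → ℂ} (h₁ : SmirnovUHP f₁) (h : ∀ z ∈ UHP, f₂ z = f₁ z) :
    SmirnovUHP f₂ := by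
  obtain ⟨g, h', hg, hh, ho, e⟩ := h₁
  exact ⟨g, h', hg, hh, ho, fun z hz => (h z hz).trans (e z hz)⟩

theorem norm_cauchy_term_le {c t z : ℂ} {ε : ℝ} (hε : 0 < ε) (ht0 : t ≠ 0) (ht : t.im ≤ 0)
    (hz : ε ≤ z.im) : ‖c / (t - z)‖ ≤ ‖c‖ / ‖t‖ * (1 + ‖z‖ / ε) := by
  have h1 : ε ≤ ‖t - z‖ := by
    refine le_trans ?_ (abs_im_le_norm _)
    rw [sub_im, abs_sub_comm]
    exact le_trans (by linarith) (le_abs_self _)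
  have h2 : 0 < ‖t‖ := norm_pos_iff.2 ht0
  have h3 : ‖t‖ ≤ (1 + ‖z‖ / ε) * ‖t - z‖ := by
    have h4 : ‖t‖ ≤ ‖t - z‖ + ‖z‖ := by simpa using norm_add_le (t - z) z
    have h5 : ‖z‖ ≤ ‖z‖ / ε * ‖t - z‖ := by
      calc ‖z‖ = ‖z‖ / ε * ε := by field_simp
        _ ≤ _ := by gcongr
    linarith
  rw [norm_div, div_mul_eq_mul_div, div_le_div_iff₀ (hε.trans_le h1) h2, mul_assoc]
  exact mul_le_mul_of_nonneg_left h3 (norm_nonneg c)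

theorem im_ofReal_div_sub (r : ℝ) (t z : ℂ) :
    ((r : ℂ) / (t - z)).im = r * ((z.im - t.im) / normSq (t - z)) := by
  rw [div_im, ofReal_im, ofReal_re, sub_im]
  ring

section CauchySeries

variable {t : ℕ → ℂ} {c : ℕ → ℂ}

theorem summable_cauchy (ht0 : ∀ n, t n ≠ 0) (htim : ∀ n, (t n).im ≤ 0)
    (hc : Summable fun n => ‖c n‖ / ‖t n‖) {z : ℂ} (hz : z ∈ UHP) :
    Summable fun n => c n / (t n - z) :=
  Summable.of_norm_bounded (hc.mul_right _) fun n =>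
    norm_cauchy_term_le hz (ht0 n) (htim n) le_rfl

theorem norm_tsum_cauchy_le (ht0 : ∀ n, t n ≠ 0) (htim : ∀ n, (t n).im ≤ 0)
    (hc : Summable fun n => ‖c n‖ / ‖t n‖) {ε : ℝ} (hε : 0 < ε) {z : ℂ} (hz : ε ≤ z.im) :
    ‖∑' n, c n / (t n - z)‖ ≤ (∑' n, ‖c n‖ / ‖t n‖) * (1 + ‖z‖ / ε) := by
  rw [← tsum_mul_right]
  exact tsum_of_norm_bounded (hc.mul_right _).hasSum fun n =>
    norm_cauchy_term_le hε (ht0 n) (htim n) hz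

theorem differentiableOn_tsum_cauchy (ht0 : ∀ n, t n ≠ 0) (htim : ∀ n, (t n).im ≤ 0)
    (hc : Summable fun n => ‖c n‖ / ‖t n‖) :
    DifferentiableOn ℂ (fun z => ∑' n, c n / (t n - z)) UHP := by
  intro z₀ (hz₀ : 0 < z₀.im)
  let U : Set ℂ := {z | z₀.im / 2 < z.im} ∩ Metric.ball 0 (‖z₀‖ + 1)
  have hU : IsOpen U := (isOpen_lt continuous_const continuous_im).inter Metric.isOpen_ball
  have hz₀U : z₀ ∈ U := ⟨half_lt_self hz₀, by simp⟩
  have hd : DifferentiableOn ℂ (fun z => ∑' n, c n / (t n - z)) U := by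
    refine differentiableOn_tsum_of_summable_norm
      (hc.mul_right (1 + (‖z₀‖ + 1) / (z₀.im / 2))) (fun n => ?_) hU fun n z hz => ?_
    · refine (differentiableOn_const _).div (by fun_prop) fun z hz h => ?_
      have h1 : z₀.im / 2 < z.im := hz.1
      have h2 := congrArg im h
      rw [sub_im, zero_im] at h2
      linarith [htim n]
    · refine (norm_cauchy_term_le (half_pos hz₀) (ht0 n) (htim n) (le_of_lt hz.1)).trans ?_
      have : ‖z‖ ≤ ‖z₀‖ + 1 := (mem_ball_zero_iff.1 hz.2).le
      gcongr
  exact (hd.differentiableAt (hU.mem_nhds hz₀U)).differentiableWithinAt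

theorem im_tsum_cauchy {r : ℕ → ℝ} (ht0 : ∀ n, t n ≠ 0) (htim : ∀ n, (t n).im ≤ 0)
    (hr : Summable fun n => ‖(r n : ℂ)‖ / ‖t n‖) {z : ℂ} (hz : z ∈ UHP) :
    HasSum (fun n => r n * ((z.im - (t n).im) / normSq (t n - z)))
      (∑' n, (r n : ℂ) / (t n - z)).im := by
  simpa only [im_ofReal_div_sub] using hasSum_im (summable_cauchy ht0 htim hr hz).hasSum

theorem poisson_term_pos (htim : ∀ n, (t n).im ≤ 0) {z : ℂ} (hz : z ∈ UHP) (n : ℕ) :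
    0 < (z.im - (t n).im) / normSq (t n - z) := by
  have h : 0 < z.im - (t n).im := by linarith [htim n, show 0 < z.im from hz]
  refine div_pos h (normSq_pos.2 fun h' => ?_)
  have := congrArg im h'
  rw [sub_im, zero_im] at this
  linarith

theorem smirnovUHP_tsum_cauchy_of_nonneg {r : ℕ → ℝ} (ht0 : ∀ n, t n ≠ 0)
    (htim : ∀ n, (t n).im ≤ 0) (hr0 : ∀ n, 0 ≤ r n) (hc : Summable fun n => ‖c n‖ / ‖t n‖)
    (hrc : ∀ n, r n ≤ ‖c n‖) :
    SmirnovUHP fun z => ∑' n, (r n : ℂ) / (t n - z) := by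
  have hr : Summable fun n => ‖(r n : ℂ)‖ / ‖t n‖ := by
    refine Summable.of_nonneg_of_le (fun n => by positivity) (fun n => ?_) hc
    rw [norm_real, Real.norm_of_nonneg (hr0 n)]
    gcongr
    exact hrc n
  refine smirnovUHP_of_im_nonneg (differentiableOn_tsum_cauchy ht0 htim hr) (fun z hz => ?_)
    fun ε hε => ?_
  · exact (im_tsum_cauchy ht0 htim hr hz).nonneg fun n =>
      mul_nonneg (hr0 n) (poisson_term_pos htim hz n).le
  · refine ⟨(∑' n, ‖(r n : ℂ)‖ / ‖t n‖) * (1 + 1 / ε), fun z hz =>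
      (norm_tsum_cauchy_le ht0 htim hr hε hz).trans ?_⟩
    rw [mul_assoc]
    refine mul_le_mul_of_nonneg_left ?_ (tsum_nonneg fun n => by positivity)
    have h1 : 0 < 1 / ε := by positivity
    have h2 : ‖z‖ / ε = 1 / ε * ‖z‖ := by ring
    rw [h2]
    nlinarith [norm_nonneg z]

end CauchySeries

/-- Let `f(z) = Σₙ cₙ/(tₙ − z)` with all poles `tₙ` in the closed
lower half-plane, `tₙ ≠ 0` and `Σₙ |cₙ|/|tₙ| < ∞`. Then `f` belongs to the Smirnov
class in `ℂ⁺`; in particular, if all `cₙ` are positive reals then `Im f > 0` on `ℂ⁺`. -/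
theorem stmt18 (t : ℕ → ℂ) (ht0 : ∀ n, t n ≠ 0) (htim : ∀ n, (t n).im ≤ 0)
    (c : ℕ → ℂ) (hc : Summable fun n => ‖c n‖ / ‖t n‖)
    (f : ℂ → ℂ) (hf : ∀ z ∈ UHP, f z = ∑' n, c n / (t n - z)) :
    SmirnovUHP f ∧
      ((∀ n, ∃ r : ℝ, 0 < r ∧ c n = (r : ℂ)) → ∀ z ∈ UHP, 0 < (f z).im) := by
  constructor
  · have key : ∀ r : ℕ → ℝ, (∀ n, 0 ≤ r n) → (∀ n, r n ≤ ‖c n‖) →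
        SmirnovUHP (fun z => ∑' n, (r n : ℂ) / (t n - z)) ∧
        ∀ z ∈ UHP, Summable fun n => (r n : ℂ) / (t n - z) := by
      intro r h0 h1
      refine ⟨smirnovUHP_tsum_cauchy_of_nonneg ht0 htim h0 hc h1, fun z hz =>
        summable_cauchy ht0 htim ?_ hz⟩
      refine Summable.of_nonneg_of_le (fun n => by positivity) (fun n => ?_) hc
      rw [norm_real, Real.norm_of_nonneg (h0 n)]
      gcongr
      exact h1 n
    have hre : ∀ n, |(c n).re| ≤ ‖c n‖ := fun n => abs_re_le_norm _
    have him : ∀ n, |(c n).im| ≤ ‖c n‖ := fun n => abs_im_le_norm _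
    obtain ⟨s₁, h₁⟩ := key (fun n => (c n).re⁺) (fun n => posPart_nonneg _) fun n =>
      ((le_add_of_nonneg_right (negPart_nonneg _)).trans_eq (posPart_add_negPart _)).trans (hre n)
    obtain ⟨s₂, h₂⟩ := key (fun n => (c n).re⁻) (fun n => negPart_nonneg _) fun n =>
      ((le_add_of_nonneg_left (posPart_nonneg _)).trans_eq (posPart_add_negPart _)).trans (hre n)
    obtain ⟨s₃, h₃⟩ := key (fun n => (c n).im⁺) (fun n => posPart_nonneg _) fun n =>
      ((le_add_of_nonneg_right (negPart_nonneg _)).trans_eq (posPart_add_negPart _)).trans (him n)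
    obtain ⟨s₄, h₄⟩ := key (fun n => (c n).im⁻) (fun n => negPart_nonneg _) fun n =>
      ((le_add_of_nonneg_left (posPart_nonneg _)).trans_eq (posPart_add_negPart _)).trans (him n)
    refine ((s₁.add (s₂.const_mul (-1))).add
      ((s₃.const_mul I).add (s₄.const_mul (-I)))).congr fun z hz => ?_
    have h := (((h₁ z hz).hasSum.add ((h₂ z hz).hasSum.mul_left (-1))).add
      (((h₃ z hz).hasSum.mul_left I).add ((h₄ z hz).hasSum.mul_left (-I)))).tsum_eq
    rw [hf z hz, ← h]
    refine tsum_congr fun n => ?_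
    have e1 : (((c n).re⁺ : ℝ) : ℂ) - ((c n).re⁻ : ℝ) = (c n).re := by
      rw [← ofReal_sub, posPart_sub_negPart]
    have e2 : (((c n).im⁺ : ℝ) : ℂ) - ((c n).im⁻ : ℝ) = (c n).im := by
      rw [← ofReal_sub, posPart_sub_negPart]
    nth_rewrite 1 [← re_add_im (c n)]
    rw [← e1, ← e2]
    ring
  · intro hpos z hz
    choose r hr0 hr using hpos
    simp only [hr] at hc hf
    have h := im_tsum_cauchy ht0 htim hc hz
    rw [hf z hz, ← h.tsum_eq]
    have hterm : ∀ n, 0 < r n * ((z.im - (t n).im) / normSq (t n - z)) := fun n =>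
      mul_pos (hr0 n) (poisson_term_pos htim hz n)
    exact h.summable.tsum_pos (fun n => (hterm n).le) 0 (hterm 0)
end
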